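/- arXiv:2503.05903 — 3 statements merged into one kernel-verified Lean document; each statement's English description precedes it below -/
import Mathlib

section
/- Let n∈ℕ, p>1 and α∈(0,1). Then there exists a constant c = c(n,p,α) > 0 such that for every R>0 and every function u:ℝⁿ→ℝ that is continuously differentiable on an open set containing the closed ball B̄_R (centered at any point) one has ‖∇u‖_{L^p(B_R)} ≤ (c/R) ‖u‖_{L^p(B_R)} + c ‖u‖_{L^p(B_R)}^{α/(1+α)} [∇u]_{W^{α,p}(B_R)}^{1/(1+α)}, where [∇u]_{W^{α,p}(B_R)} := (∬_{B_R×B_R} |∇u(x)−∇u(y)|^p/|x−y|^{n+αp} dx dy)^{1/p} (the inequality being interpreted as trivially true if this seminorm is infinite). -/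
open MeasureTheory Metric Set
open scoped ENNReal

noncomputable section

/-- Double Gagliardo integral `∬_{D×D} |u(x)-u(y)|^p / |x-y|^{n+sp} dx dy` in `ℝ≥0∞`. -/
def gagliardoE (n : ℕ) (s p : ℝ) (D : Set (EuclideanSpace ℝ (Fin n)))
    (u : EuclideanSpace ℝ (Fin n) → ℝ) : ℝ≥0∞ :=
  ∫⁻ x in D, ∫⁻ y in D, ENNReal.ofReal (|u x - u y| ^ p / dist x y ^ ((n : ℝ) + s * p))

/-- Nonlocal tail `Tail(u; B_R(x₀))` in `ℝ≥0∞`. -/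
def tailE (n : ℕ) (s p : ℝ) (u : EuclideanSpace ℝ (Fin n) → ℝ)
    (x₀ : EuclideanSpace ℝ (Fin n)) (R : ℝ) : ℝ≥0∞ :=
  (ENNReal.ofReal (R ^ (s * p)) *
      ∫⁻ x in (ball x₀ R)ᶜ,
        ENNReal.ofReal (|u x| ^ (p - 1) / dist x x₀ ^ ((n : ℝ) + s * p))) ^ (1 / (p - 1))

/-- `f ∈ L^q_loc(D)`. -/
def MemLploc (n : ℕ) (q : ℝ) (D : Set (EuclideanSpace ℝ (Fin n)))
    (f : EuclideanSpace ℝ (Fin n) → ℝ) : Prop :=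
  Measurable f ∧
    ∀ K : Set (EuclideanSpace ℝ (Fin n)), K ⊆ D → IsCompact K →
      (∫⁻ x in K, ENNReal.ofReal (|f x| ^ q)) < ⊤

/-- `u` is a local weak solution of `(-Δ_p)^s u = f` in `D`. -/
def IsLocalWeakSolution (n : ℕ) (p s : ℝ) (D : Set (EuclideanSpace ℝ (Fin n)))
    (f u : EuclideanSpace ℝ (Fin n) → ℝ) : Prop :=
  Measurable u ∧
  (∀ K : Set (EuclideanSpace ℝ (Fin n)), K ⊆ D → IsCompact K →
      (∫⁻ x in K, ENNReal.ofReal (|u x| ^ p)) < ⊤ ∧ gagliardoE n s p K u < ⊤) ∧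
  (∫⁻ x, ENNReal.ofReal (|u x| ^ (p - 1) / (1 + ‖x‖) ^ ((n : ℝ) + s * p))) < ⊤ ∧
  ∀ φ : EuclideanSpace ℝ (Fin n) → ℝ, Measurable φ →
    (∃ K : Set (EuclideanSpace ℝ (Fin n)), IsCompact K ∧ K ⊆ D ∧
      ∀ᵐ x, x ∉ K → φ x = 0) →
    (∫⁻ x, ENNReal.ofReal (|φ x| ^ p)) < ⊤ →
    gagliardoE n s p Set.univ φ < ⊤ →
    (∫ x, ∫ y,
        |u x - u y| ^ (p - 2) * (u x - u y) * (φ x - φ y) / dist x y ^ ((n : ℝ) + s * p)) =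
      ∫ x in D, f x * φ x

/-- The signed `γ`-power `𝐚^γ = |a|^{γ-1} a`. -/
def sgnPow (γ a : ℝ) : ℝ := |a| ^ (γ - 1) * a

/-- Gagliardo seminorm of the gradient `[∇u]_{W^{α,p}(D)}` in `ℝ≥0∞`. -/
def gagliardoGradE (n : ℕ) (α p : ℝ) (D : Set (EuclideanSpace ℝ (Fin n)))
    (u : EuclideanSpace ℝ (Fin n) → ℝ) : ℝ≥0∞ :=
  (∫⁻ x in D, ∫⁻ y in D,
      ENNReal.ofReal (‖gradient u x - gradient u y‖ ^ p / dist x y ^ ((n : ℝ) + α * p))) ^ (1 / p)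

lemma integral_fderiv_zero_aux (n : ℕ) (h : EuclideanSpace ℝ (Fin n) → ℝ) (hc : ContDiff ℝ 1 h)
    (hs : HasCompactSupport h) : ∫ x, fderiv ℝ h x = 0 := by
  have hcont : Continuous (fderiv ℝ h) := hc.continuous_fderiv (by norm_num)
  have hint : Integrable (fderiv ℝ h) :=
    hcont.integrable_of_hasCompactSupport (hs.fderiv (𝕜 := ℝ))
  ext v
  rw [ContinuousLinearMap.integral_apply hint]
  have := integral_mul_fderiv_eq_neg_fderiv_mul_of_integrable (μ := volume)
    (f := fun _ : EuclideanSpace ℝ (Fin n) => (1:ℝ)) (g := h) (v := v)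
    (by simp) (by simpa using hint.apply_continuousLinearMap v)
    (by simpa using hc.continuous.integrable_of_hasCompactSupport hs)
    (fun _ _ => by simp) (fun x _ => hc.differentiable (by norm_num) x)
  simpa using this

lemma unit_aux (n : ℕ) : ∃ C : ℝ≥0∞, C ≠ ⊤ ∧ ∀ (g : EuclideanSpace ℝ (Fin n) → ℝ),
    ContDiffOn ℝ 1 g (ball 0 1) → ∀ a : EuclideanSpace ℝ (Fin n) →L[ℝ] ℝ,
    ‖a‖ₑ ≤ C * ∫⁻ w in ball 0 1, (‖a - fderiv ℝ g w‖ₑ + ‖g w‖ₑ) := by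
  let ψ : ContDiffBump (0 : EuclideanSpace ℝ (Fin n)) := ⟨1/4, 1/2, by norm_num, by norm_num⟩
  have hψc : ContDiff ℝ 1 ψ := ψ.contDiff
  have hψs : HasCompactSupport ψ := ψ.hasCompactSupport
  have hψi : Integrable ψ := hψc.continuous.integrable_of_hasCompactSupport hψs
  have hψt : tsupport ψ ⊆ ball 0 1 := by
    rw [ψ.tsupport_eq]
    exact closedBall_subset_ball (by norm_num [ψ])
  obtain ⟨K, hK⟩ := (hψs.fderiv (𝕜 := ℝ)).exists_bound_of_continuous
    (hψc.continuous_fderiv (by norm_num))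
  have hmpos : 0 < ∫ x, ψ x := ψ.integral_pos
  set m := ∫ x, ψ x with hm
  refine ⟨(ENNReal.ofReal m)⁻¹ * ENNReal.ofReal (max 1 K), by finiteness [(ENNReal.ofReal_pos.2 hmpos).ne'], ?_⟩
  intro g hg a
  let h : EuclideanSpace ℝ (Fin n) → ℝ := fun x => ψ x * g x
  have hts : tsupport h ⊆ tsupport ψ := tsupport_mul_subset_left
  have hh : ContDiff ℝ 1 h := by
    rw [← contMDiff_iff_contDiff]
    refine contMDiff_of_tsupport fun x hx => ?_
    rw [contMDiffAt_iff_contDiffAt]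
    exact hψc.contDiffAt.mul (hg.contDiffAt (isOpen_ball.mem_nhds (hψt (hts hx))))
  have hhs : HasCompactSupport h := hψs.mul_right
  have h0 := integral_fderiv_zero_aux n h hh hhs
  have hint : Integrable (fderiv ℝ h) :=
    (hh.continuous_fderiv (by norm_num)).integrable_of_hasCompactSupport (hhs.fderiv (𝕜 := ℝ))
  have key : m • a = ∫ x, (ψ x • a - fderiv ℝ h x) := by
    rw [integral_sub (hψi.smul_const a) hint, h0, sub_zero, integral_smul_const]
  have hb : ∀ x, ‖ψ x • a - fderiv ℝ h x‖ₑ ≤ (ball 0 1).indicator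
      (fun w => ENNReal.ofReal (max 1 K) * (‖a - fderiv ℝ g w‖ₑ + ‖g w‖ₑ)) x := by
    intro x
    by_cases hx : x ∈ ball (0 : EuclideanSpace ℝ (Fin n)) 1
    · rw [indicator_of_mem hx]
      have hga : DifferentiableAt ℝ g x :=
        (hg.contDiffAt (isOpen_ball.mem_nhds hx)).differentiableAt (by norm_num)
      have hd : fderiv ℝ h x = ψ x • fderiv ℝ g x + g x • fderiv ℝ ψ x :=
        fderiv_fun_mul (hψc.differentiable (by norm_num) x) hga
      have e : ψ x • a - fderiv ℝ h x = ψ x • (a - fderiv ℝ g x) - g x • fderiv ℝ ψ x := by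
        rw [hd, smul_sub]; abel
      rw [e]
      have : ‖ψ x • (a - fderiv ℝ g x) - g x • fderiv ℝ ψ x‖ ≤
          max 1 K * (‖a - fderiv ℝ g x‖ + ‖g x‖) := by
        refine (norm_sub_le _ _).trans ?_
        rw [norm_smul, norm_smul, mul_add]
        gcongr ?_ * _ + ?_
        · rw [Real.norm_of_nonneg ψ.nonneg]
          exact ψ.le_one.trans (le_max_left _ _)
        · rw [mul_comm]
          gcongr
          exact (hK x).trans (le_max_right _ _)
      rw [← ofReal_norm, ← ofReal_norm, ← ofReal_norm,
        ← ENNReal.ofReal_add (norm_nonneg _) (norm_nonneg _), ← ENNReal.ofReal_mul (by positivity)]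
      exact ENNReal.ofReal_le_ofReal this
    · rw [indicator_of_notMem hx]
      have h1 : ψ x = 0 := image_eq_zero_of_notMem_tsupport fun H => hx (hψt H)
      have h2 : fderiv ℝ h x = 0 := by
        exact image_eq_zero_of_notMem_tsupport fun H => hx (hψt (hts (tsupport_fderiv_subset ℝ H)))
      rw [h1, h2, zero_smul, sub_zero]
      rw [← ofReal_norm, norm_zero, ENNReal.ofReal_zero]
  have h3 : ENNReal.ofReal m * ‖a‖ₑ ≤ ENNReal.ofReal (max 1 K) *
      ∫⁻ w in ball 0 1, (‖a - fderiv ℝ g w‖ₑ + ‖g w‖ₑ) := by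
    calc ENNReal.ofReal m * ‖a‖ₑ = ‖m • a‖ₑ := by
          rw [enorm_smul, ← ofReal_norm m, Real.norm_of_nonneg hmpos.le]
      _ ≤ ∫⁻ x, ‖ψ x • a - fderiv ℝ h x‖ₑ := by
          rw [key]; exact enorm_integral_le_lintegral_enorm _
      _ ≤ _ := lintegral_mono hb
      _ = _ := by
          rw [lintegral_indicator measurableSet_ball, lintegral_const_mul' _ _ (by finiteness)]
  calc ‖a‖ₑ = (ENNReal.ofReal m)⁻¹ * (ENNReal.ofReal m * ‖a‖ₑ) := by
        rw [← mul_assoc, ENNReal.inv_mul_cancel (ENNReal.ofReal_pos.2 hmpos).ne' (by finiteness),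
          one_mul]
    _ ≤ _ := by rw [mul_assoc]; gcongr

lemma unit_aux_p (n : ℕ) (p : ℝ) (hp : 1 < p) :
    ∃ C : ℝ≥0∞, C ≠ ⊤ ∧ ∀ (g : EuclideanSpace ℝ (Fin n) → ℝ),
    ContDiffOn ℝ 1 g (ball 0 1) → ∀ a : EuclideanSpace ℝ (Fin n) →L[ℝ] ℝ,
    ‖a‖ₑ ^ p ≤ C * ∫⁻ w in ball 0 1, (‖a - fderiv ℝ g w‖ₑ ^ p + ‖g w‖ₑ ^ p) := by
  obtain ⟨C, hC, H⟩ := unit_aux n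
  have hp0 : 0 < p := by linarith
  have hv : volume (ball (0 : EuclideanSpace ℝ (Fin n)) 1) ≠ ⊤ := measure_ball_lt_top.ne
  refine ⟨C ^ p * (volume (ball (0 : EuclideanSpace ℝ (Fin n)) 1) ^ (1 - 1 / p)) ^ p * 2 ^ (p - 1),
    ?_, ?_⟩
  · have : 0 ≤ 1 - 1/p := by rw [sub_nonneg, div_le_one hp0]; exact hp.le
    have : 0 ≤ p - 1 := by linarith
    finiteness
  intro g hg a
  set F : EuclideanSpace ℝ (Fin n) → ℝ≥0∞ := fun w => ‖a - fderiv ℝ g w‖ₑ + ‖g w‖ₑ with hF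
  have hFm : AEMeasurable F (volume.restrict (ball 0 1)) := by
    have c1 : ContinuousOn (fderiv ℝ g) (ball 0 1) :=
      hg.continuousOn_fderiv_of_isOpen isOpen_ball (by norm_num)
    have c2 : ContinuousOn g (ball 0 1) := hg.continuousOn
    have : ContinuousOn F (ball 0 1) :=
      (continuousOn_const.sub c1).enorm.add c2.enorm
    exact this.aemeasurable measurableSet_ball
  have hJ : ∫⁻ w in ball 0 1, F w ≤ (∫⁻ w in ball 0 1, F w ^ p) ^ (1 / p) *
      volume (ball (0 : EuclideanSpace ℝ (Fin n)) 1) ^ (1 - 1 / p) := by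
    have := eLpNorm'_le_eLpNorm'_mul_rpow_measure_univ (p := 1) (q := p) one_pos hp.le
      hFm.aestronglyMeasurable
    simpa [eLpNorm'] using this
  calc ‖a‖ₑ ^ p ≤ (C * ((∫⁻ w in ball 0 1, F w ^ p) ^ (1 / p) *
      volume (ball (0 : EuclideanSpace ℝ (Fin n)) 1) ^ (1 - 1 / p))) ^ p := by
        gcongr
        exact (H g hg a).trans (by gcongr)
    _ = C ^ p * (volume (ball (0 : EuclideanSpace ℝ (Fin n)) 1) ^ (1 - 1 / p)) ^ p *
          ∫⁻ w in ball 0 1, F w ^ p := by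
        rw [ENNReal.mul_rpow_of_nonneg _ _ hp0.le, ENNReal.mul_rpow_of_nonneg _ _ hp0.le,
          ← ENNReal.rpow_mul (∫⁻ w in ball 0 1, F w ^ p), one_div_mul_cancel hp0.ne', ENNReal.rpow_one]
        ring
    _ ≤ C ^ p * (volume (ball (0 : EuclideanSpace ℝ (Fin n)) 1) ^ (1 - 1 / p)) ^ p *
          ∫⁻ w in ball 0 1, 2 ^ (p - 1) * (‖a - fderiv ℝ g w‖ₑ ^ p + ‖g w‖ₑ ^ p) := by
        gcongr with w
        exact ENNReal.rpow_add_le_mul_rpow_add_rpow _ _ hp.le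
    _ = _ := by
        rw [lintegral_const_mul' _ _ (by have : 0 ≤ p - 1 := by linarith
                                         finiteness)]
        ring

lemma lintegral_affine_aux (n : ℕ) (F : EuclideanSpace ℝ (Fin n) → ℝ≥0∞)
    (z : EuclideanSpace ℝ (Fin n)) (ε : ℝ) (hε : 0 < ε) :
    ∫⁻ w, F (z + ε • w) = ENNReal.ofReal ((ε ^ n)⁻¹) * ∫⁻ y, F y := by
  let T : EuclideanSpace ℝ (Fin n) ≃ᵐ EuclideanSpace ℝ (Fin n) :=
    (Homeomorph.smulOfNeZero ε hε.ne').toMeasurableEquiv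
  have h1 := lintegral_map_equiv (μ := volume) (fun y => F (z + y)) T
  have h2 : Measure.map T (volume : Measure (EuclideanSpace ℝ (Fin n))) =
      ENNReal.ofReal ((ε ^ n)⁻¹) • volume := by
    have := Measure.map_addHaar_smul (volume : Measure (EuclideanSpace ℝ (Fin n))) hε.ne'
    rw [finrank_euclideanSpace_fin, abs_of_pos (by positivity)] at this
    exact this
  rw [h2, lintegral_smul_measure, lintegral_add_left_eq_self F z] at h1
  exact h1.symm

lemma local_aux (n : ℕ) (p : ℝ) (hp : 1 < p) :
    ∃ C : ℝ≥0∞, C ≠ ⊤ ∧ ∀ (R : ℝ) (x₀ : EuclideanSpace ℝ (Fin n))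
      (u : EuclideanSpace ℝ (Fin n) → ℝ), 0 < R → ContDiffOn ℝ 1 u (ball x₀ R) →
      ∀ ε : ℝ, 0 < ε → ε ≤ R → ∀ x ∈ ball x₀ R,
      ENNReal.ofReal (ε ^ p) * ‖fderiv ℝ u x‖ₑ ^ p ≤ C * (ENNReal.ofReal ((ε ^ n)⁻¹) *
        ∫⁻ y in ball x₀ R, (ball x (2 * ε)).indicator (fun y => ENNReal.ofReal (ε ^ p) *
          ‖fderiv ℝ u x - fderiv ℝ u y‖ₑ ^ p + ‖u y‖ₑ ^ p) y) := by
  obtain ⟨C, hC, H⟩ := unit_aux_p n p hp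
  refine ⟨C, hC, ?_⟩
  intro R x₀ u hR hu ε hε hεR x hx
  have hp0 : 0 < p := by linarith
  set z := x + (ε / R) • (x₀ - x) with hz
  have hxR : ‖x - x₀‖ < R := by rwa [mem_ball_iff_norm] at hx
  have ht1 : ε / R ≤ 1 := (div_le_one hR).2 hεR
  have hzx : ‖z - x‖ < ε := by
    have : z - x = (ε / R) • (x₀ - x) := by rw [hz, add_sub_cancel_left]
    rw [this, norm_smul, Real.norm_of_nonneg (by positivity), norm_sub_rev]
    calc ε / R * ‖x - x₀‖ < ε / R * R := by gcongr
      _ = ε := by field_simp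
  have hzx0 : ‖z - x₀‖ ≤ R - ε := by
    have : z - x₀ = (1 - ε / R) • (x - x₀) := by rw [hz]; module
    rw [this, norm_smul, Real.norm_of_nonneg (by linarith)]
    calc (1 - ε / R) * ‖x - x₀‖ ≤ (1 - ε / R) * R := by gcongr
      _ = R - ε := by field_simp
  have hmem : ∀ w ∈ ball (0 : EuclideanSpace ℝ (Fin n)) 1, ‖ε • w‖ < ε := by
    intro w hw
    rw [mem_ball_zero_iff] at hw
    rw [norm_smul, Real.norm_of_nonneg hε.le]
    calc ε * ‖w‖ < ε * 1 := by gcongr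
      _ = ε := mul_one _
  have hB : ∀ w ∈ ball (0 : EuclideanSpace ℝ (Fin n)) 1, z + ε • w ∈ ball x₀ R := by
    intro w hw
    rw [mem_ball_iff_norm]
    calc ‖z + ε • w - x₀‖ = ‖(z - x₀) + ε • w‖ := by congr 1; abel
      _ ≤ ‖z - x₀‖ + ‖ε • w‖ := norm_add_le _ _
      _ < R := by linarith [hmem w hw]
  have hB2 : ∀ w ∈ ball (0 : EuclideanSpace ℝ (Fin n)) 1, z + ε • w ∈ ball x (2 * ε) := by
    intro w hw
    rw [mem_ball_iff_norm]
    calc ‖z + ε • w - x‖ = ‖(z - x) + ε • w‖ := by congr 1; abel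
      _ ≤ ‖z - x‖ + ‖ε • w‖ := norm_add_le _ _
      _ < 2 * ε := by linarith [hmem w hw]
  have hg : ContDiffOn ℝ 1 (fun w => u (z + ε • w)) (ball 0 1) :=
    hu.comp (by fun_prop) hB
  have hfd : ∀ w ∈ ball (0 : EuclideanSpace ℝ (Fin n)) 1,
      fderiv ℝ (fun w => u (z + ε • w)) w = ε • fderiv ℝ u (z + ε • w) := by
    intro w hw
    have h1 : HasFDerivAt u (fderiv ℝ u (z + ε • w)) (z + ε • w) :=
      ((hu.contDiffAt (isOpen_ball.mem_nhds (hB w hw))).differentiableAt (by norm_num)).hasFDerivAt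
    have h2 : HasFDerivAt (fun w : EuclideanSpace ℝ (Fin n) => z + ε • w)
        (ε • ContinuousLinearMap.id ℝ _) w := ((hasFDerivAt_id w).const_smul ε).const_add z
    have h3 : fderiv ℝ (fun w => u (z + ε • w)) w = _ := (h1.comp w h2).fderiv
    rw [h3]
    ext v; simp
  have hsm : ∀ L : EuclideanSpace ℝ (Fin n) →L[ℝ] ℝ,
      ‖ε • L‖ₑ ^ p = ENNReal.ofReal (ε ^ p) * ‖L‖ₑ ^ p := by
    intro L
    rw [enorm_smul, ENNReal.mul_rpow_of_nonneg _ _ hp0.le, ← ofReal_norm ε,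
      Real.norm_of_nonneg hε.le, ENNReal.ofReal_rpow_of_nonneg hε.le hp0.le]
  have := H _ hg (ε • fderiv ℝ u x)
  rw [hsm] at this
  refine this.trans ?_
  gcongr
  rw [← lintegral_indicator measurableSet_ball, ← lintegral_indicator measurableSet_ball,
    ← lintegral_affine_aux n _ z ε hε]
  refine lintegral_mono fun w => ?_
  by_cases hw : w ∈ ball (0 : EuclideanSpace ℝ (Fin n)) 1
  · rw [indicator_of_mem hw, indicator_of_mem (hB w hw), indicator_of_mem (hB2 w hw), hfd w hw]
    have e : ε • fderiv ℝ u x - ε • fderiv ℝ u (z + ε • w) =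
        ε • (fderiv ℝ u x - fderiv ℝ u (z + ε • w)) := by
      ext v; simp [mul_sub]
    rw [e, hsm]
  · rw [indicator_of_notMem hw]; exact zero_le

lemma enorm_fderiv_sub_aux (n : ℕ) (u : EuclideanSpace ℝ (Fin n) → ℝ) (p : ℝ) (hp : 0 < p)
    (x y : EuclideanSpace ℝ (Fin n)) :
    ‖fderiv ℝ u x - fderiv ℝ u y‖ₑ ^ p = ENNReal.ofReal (‖gradient u x - gradient u y‖ ^ p) := by
  rw [gradient, gradient, ← map_sub, LinearIsometryEquiv.norm_map,
    ← ENNReal.ofReal_rpow_of_nonneg (norm_nonneg _) hp.le, ofReal_norm]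

lemma enorm_fderiv_aux (n : ℕ) (u : EuclideanSpace ℝ (Fin n) → ℝ) (p : ℝ) (hp : 0 < p)
    (x : EuclideanSpace ℝ (Fin n)) :
    ‖fderiv ℝ u x‖ₑ ^ p = ENNReal.ofReal (‖gradient u x‖ ^ p) := by
  rw [gradient, LinearIsometryEquiv.norm_map,
    ← ENNReal.ofReal_rpow_of_nonneg (norm_nonneg _) hp.le, ofReal_norm]

lemma tonelli_aux (n : ℕ) (W : EuclideanSpace ℝ (Fin n) → ℝ≥0∞) (hW : Measurable W) (r : ℝ) :
    Measurable (fun x => ∫⁻ y, (ball x r).indicator W y) ∧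
    ∫⁻ x, ∫⁻ y, (ball x r).indicator W y =
      volume (ball (0 : EuclideanSpace ℝ (Fin n)) r) * ∫⁻ y, W y := by
  have hm : Measurable (Function.uncurry
      (fun x y : EuclideanSpace ℝ (Fin n) => (ball x r).indicator W y)) := by
    have : Function.uncurry (fun x y : EuclideanSpace ℝ (Fin n) => (ball x r).indicator W y) =
        {q : EuclideanSpace ℝ (Fin n) × EuclideanSpace ℝ (Fin n) | dist q.2 q.1 < r}.indicator
          (fun q => W q.2) := by
      ext ⟨x, y⟩
      simp [indicator, Function.uncurry]
    rw [this]
    refine (hW.comp measurable_snd).indicator ?_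
    exact (isOpen_lt (by fun_prop) continuous_const).measurableSet
  refine ⟨hm.lintegral_prod_right, ?_⟩
  rw [lintegral_lintegral_swap hm.aemeasurable, ← lintegral_const_mul _ hW]
  congr 1 with y
  have : ∀ x, (ball x r).indicator W y = (ball y r).indicator (fun _ => W y) x := by
    intro x; simp [indicator, dist_comm]
  simp_rw [this]
  rw [lintegral_indicator measurableSet_ball, setLIntegral_const, mul_comm,
    Measure.addHaar_ball_center]

lemma global_aux (n : ℕ) (p α : ℝ) (hp : 1 < p) (hα₁ : 0 < α) :
    ∃ C : ℝ≥0∞, C ≠ ⊤ ∧ ∀ (R : ℝ) (x₀ : EuclideanSpace ℝ (Fin n))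
      (u : EuclideanSpace ℝ (Fin n) → ℝ), 0 < R → ContDiffOn ℝ 1 u (ball x₀ R) →
      ∀ ε : ℝ, 0 < ε → ε ≤ R →
      ∫⁻ x in ball x₀ R, ENNReal.ofReal (‖gradient u x‖ ^ p) ≤
        C * (ENNReal.ofReal (ε ^ (α * p)) * (∫⁻ x in ball x₀ R, ∫⁻ y in ball x₀ R,
          ENNReal.ofReal (‖gradient u x - gradient u y‖ ^ p / dist x y ^ ((n : ℝ) + α * p))) +
          ENNReal.ofReal (ε ^ (-p)) * ∫⁻ x in ball x₀ R, ENNReal.ofReal (|u x| ^ p)) := by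
  obtain ⟨C, hC, H⟩ := local_aux n p hp
  have hp0 : 0 < p := by linarith
  set V := volume (ball (0 : EuclideanSpace ℝ (Fin n)) 1) with hV
  have hVt : V ≠ ⊤ := measure_ball_lt_top.ne
  refine ⟨C * (ENNReal.ofReal (2 ^ ((n : ℝ) + α * p)) + ENNReal.ofReal (2 ^ n) * V),
    by finiteness, ?_⟩
  intro R x₀ u hR hu ε hε hεR
  set A := ∫⁻ x in ball x₀ R, ENNReal.ofReal (‖gradient u x‖ ^ p) with hA
  set G := ∫⁻ x in ball x₀ R, ∫⁻ y in ball x₀ R,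
          ENNReal.ofReal (‖gradient u x - gradient u y‖ ^ p / dist x y ^ ((n : ℝ) + α * p)) with hG
  set U := ∫⁻ x in ball x₀ R, ENNReal.ofReal (|u x| ^ p) with hU
  let W : EuclideanSpace ℝ (Fin n) → ℝ≥0∞ := (ball x₀ R).indicator (fun y => ‖u y‖ₑ ^ p)
  have hW : Measurable W := by
    classical
    have : W = (ball x₀ R).piecewise (fun y => ‖u y‖ₑ ^ p) (fun _ => 0) :=
      (Set.piecewise_eq_indicator (s := ball x₀ R)).symm
    rw [this]
    refine ContinuousOn.measurable_piecewise ?_ continuousOn_const measurableSet_ball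
    exact ENNReal.continuous_rpow_const.comp_continuousOn hu.continuousOn.enorm
  have hWU : ∫⁻ y, W y = U := by
    rw [lintegral_indicator measurableSet_ball, hU]
    congr 1 with y
    rw [← ENNReal.ofReal_rpow_of_nonneg (abs_nonneg _) hp0.le, ← Real.norm_eq_abs, ofReal_norm]
  obtain ⟨hSm, hS⟩ := tonelli_aux n W hW (2 * ε)
  set k : ℝ≥0∞ := ENNReal.ofReal (ε ^ p) * ENNReal.ofReal ((2 * ε) ^ ((n : ℝ) + α * p)) with hk
  have hkt : k ≠ ⊤ := by finiteness
  -- pointwise bound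
  have hpt : ∀ x ∈ ball x₀ R, ENNReal.ofReal (ε ^ p) * ENNReal.ofReal (‖gradient u x‖ ^ p) ≤
      C * (ENNReal.ofReal ((ε ^ n)⁻¹) * (k * (∫⁻ y in ball x₀ R,
        ENNReal.ofReal (‖gradient u x - gradient u y‖ ^ p / dist x y ^ ((n : ℝ) + α * p))) +
        ∫⁻ y, (ball x (2 * ε)).indicator W y)) := by
    intro x hx
    rw [← enorm_fderiv_aux n u p hp0]
    refine (H R x₀ u hR hu ε hε hεR x hx).trans ?_
    gcongr
    rw [← lintegral_const_mul' _ _ hkt, ← lintegral_indicator measurableSet_ball,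
      ← lintegral_indicator measurableSet_ball,
      ← lintegral_add_right _ (hW.indicator measurableSet_ball)]
    refine lintegral_mono fun y => ?_
    by_cases hy : y ∈ ball x₀ R
    · rw [indicator_of_mem hy, indicator_of_mem hy]
      by_cases hy2 : y ∈ ball x (2 * ε)
      · rw [indicator_of_mem hy2, indicator_of_mem hy2]
        have hWy : W y = ‖u y‖ₑ ^ p := indicator_of_mem hy _
        rw [hWy, enorm_fderiv_sub_aux n u p hp0, hk, mul_assoc]
        gcongr
        rw [← ENNReal.ofReal_mul (by positivity)]
        apply ENNReal.ofReal_le_ofReal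
        by_cases hxy : x = y
        · subst hxy
          simp [Real.zero_rpow hp0.ne']
        · have hd : 0 < dist x y := dist_pos.2 hxy
          have hd2 : dist x y ≤ 2 * ε := by rw [dist_comm]; exact (mem_ball.1 hy2).le
          have hdp : 0 < dist x y ^ ((n : ℝ) + α * p) := by positivity
          rw [← mul_div_assoc, le_div_iff₀ hdp, mul_comm]
          gcongr
      · rw [indicator_of_notMem hy2]; exact zero_le
    · rw [indicator_of_notMem hy]; exact zero_le
  have hint : ENNReal.ofReal (ε ^ p) * A ≤
      C * (ENNReal.ofReal ((ε ^ n)⁻¹) * (k * G +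
        volume (ball (0 : EuclideanSpace ℝ (Fin n)) (2 * ε)) * U)) := by
    calc ENNReal.ofReal (ε ^ p) * A = ∫⁻ x in ball x₀ R,
          ENNReal.ofReal (ε ^ p) * ENNReal.ofReal (‖gradient u x‖ ^ p) := by
          rw [lintegral_const_mul' _ _ (by finiteness)]
      _ ≤ ∫⁻ x in ball x₀ R, C * (ENNReal.ofReal ((ε ^ n)⁻¹) * (k * (∫⁻ y in ball x₀ R,
        ENNReal.ofReal (‖gradient u x - gradient u y‖ ^ p / dist x y ^ ((n : ℝ) + α * p))) +
        ∫⁻ y, (ball x (2 * ε)).indicator W y)) := setLIntegral_mono' measurableSet_ball hpt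
      _ = C * (ENNReal.ofReal ((ε ^ n)⁻¹) * (k * G +
        ∫⁻ x in ball x₀ R, ∫⁻ y, (ball x (2 * ε)).indicator W y)) := by
          rw [lintegral_const_mul' _ _ hC, lintegral_const_mul' _ _ (by finiteness),
            lintegral_add_right _ hSm, lintegral_const_mul' _ _ hkt]
      _ ≤ _ := by
          gcongr
          rw [← hWU, ← hS]
          exact setLIntegral_le_lintegral _ _
  have hvol : volume (ball (0 : EuclideanSpace ℝ (Fin n)) (2 * ε)) =
      ENNReal.ofReal ((2 * ε) ^ n) * V := by
    rw [Measure.addHaar_ball_of_pos _ _ (by positivity), finrank_euclideanSpace_fin]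
  have e1 : ENNReal.ofReal ((ε ^ p)⁻¹) * (ENNReal.ofReal ((ε ^ n)⁻¹) * k) =
      ENNReal.ofReal (2 ^ ((n : ℝ) + α * p)) * ENNReal.ofReal (ε ^ (α * p)) := by
    rw [hk, ← ENNReal.ofReal_mul (by positivity), ← ENNReal.ofReal_mul (by positivity),
      ← ENNReal.ofReal_mul (by positivity), ← ENNReal.ofReal_mul (by positivity)]
    congr 1
    rw [Real.mul_rpow (by norm_num) hε.le, Real.rpow_add hε, Real.rpow_natCast]
    have : 0 < ε ^ p := by positivity
    field_simp
  have e2 : ENNReal.ofReal ((ε ^ p)⁻¹) * (ENNReal.ofReal ((ε ^ n)⁻¹) *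
      ENNReal.ofReal ((2 * ε) ^ n)) = ENNReal.ofReal (2 ^ n) * ENNReal.ofReal (ε ^ (-p)) := by
    rw [← ENNReal.ofReal_mul (by positivity), ← ENNReal.ofReal_mul (by positivity),
      ← ENNReal.ofReal_mul (by positivity)]
    congr 1
    rw [mul_pow, Real.rpow_neg hε.le]
    have : 0 < ε ^ p := by positivity
    field_simp
  have e0 : ENNReal.ofReal ((ε ^ p)⁻¹) * ENNReal.ofReal (ε ^ p) = 1 := by
    rw [← ENNReal.ofReal_mul (by positivity), inv_mul_cancel₀ (by positivity), ENNReal.ofReal_one]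
  calc A = ENNReal.ofReal ((ε ^ p)⁻¹) * (ENNReal.ofReal (ε ^ p) * A) := by
        rw [← mul_assoc, e0, one_mul]
    _ ≤ ENNReal.ofReal ((ε ^ p)⁻¹) * (C * (ENNReal.ofReal ((ε ^ n)⁻¹) * (k * G +
        ENNReal.ofReal ((2 * ε) ^ n) * V * U))) := by
        rw [← hvol]; gcongr
    _ = C * ((ENNReal.ofReal ((ε ^ p)⁻¹) * (ENNReal.ofReal ((ε ^ n)⁻¹) * k)) * G +
          (ENNReal.ofReal ((ε ^ p)⁻¹) * (ENNReal.ofReal ((ε ^ n)⁻¹) *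
      ENNReal.ofReal ((2 * ε) ^ n))) * V * U) := by ring
    _ = C * (ENNReal.ofReal (2 ^ ((n : ℝ) + α * p)) * (ENNReal.ofReal (ε ^ (α * p)) * G) +
          (ENNReal.ofReal (2 ^ n) * V) * (ENNReal.ofReal (ε ^ (-p)) * U)) := by
        rw [e1, e2]; ring
    _ ≤ C * ((ENNReal.ofReal (2 ^ ((n : ℝ) + α * p)) + ENNReal.ofReal (2 ^ n) * V) *
          (ENNReal.ofReal (ε ^ (α * p)) * G) +
          (ENNReal.ofReal (2 ^ ((n : ℝ) + α * p)) + ENNReal.ofReal (2 ^ n) * V) *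
          (ENNReal.ofReal (ε ^ (-p)) * U)) := by
        gcongr
        · exact le_self_add
        · exact le_add_self
    _ = _ := by ring

lemma zero_aux (n : ℕ) (p : ℝ) (hp : 1 < p) (R : ℝ) (x₀ : EuclideanSpace ℝ (Fin n))
    (u : EuclideanSpace ℝ (Fin n) → ℝ) (hu : ContDiffOn ℝ 1 u (ball x₀ R))
    (h0 : ∫⁻ x in ball x₀ R, ENNReal.ofReal (|u x| ^ p) = 0) :
    ∫⁻ x in ball x₀ R, ENNReal.ofReal (‖gradient u x‖ ^ p) = 0 := by
  have hp0 : 0 < p := by linarith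
  have hm : AEMeasurable (fun x => ENNReal.ofReal (|u x| ^ p)) (volume.restrict (ball x₀ R)) := by
    refine ContinuousOn.aemeasurable ?_ measurableSet_ball
    refine ENNReal.continuous_ofReal.comp_continuousOn ?_
    exact hu.continuousOn.abs.rpow_const fun _ _ => Or.inr hp0.le
  rw [lintegral_eq_zero_iff' hm] at h0
  have h1 : u =ᵐ[volume.restrict (ball x₀ R)] (fun _ => (0:ℝ)) := by
    filter_upwards [h0] with x hx
    simp only [Pi.zero_apply, ENNReal.ofReal_eq_zero] at hx
    have h2 : |u x| ^ p = 0 := le_antisymm hx (by positivity)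
    rw [Real.rpow_eq_zero (abs_nonneg _) hp0.ne'] at h2
    exact abs_eq_zero.1 h2
  have h2 : EqOn u (fun _ => (0:ℝ)) (ball x₀ R) :=
    Measure.eqOn_open_of_ae_eq h1 isOpen_ball hu.continuousOn continuousOn_const
  rw [setLIntegral_congr_fun (g := fun _ => 0) measurableSet_ball, lintegral_zero]
  intro x hx
  have h3 : u =ᶠ[nhds x] (fun _ => (0:ℝ)) := h2.eventuallyEq_of_mem (isOpen_ball.mem_nhds hx)
  have h4 : gradient u x = 0 := by
    rw [gradient, h3.fderiv_eq]; simp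
  simp [h4, Real.zero_rpow hp0.ne']

lemma numeric_aux (p α : ℝ) (hp : 1 < p) (hα₁ : 0 < α) (C : ℝ≥0∞) (hC : C ≠ ⊤) (R : ℝ)
    (hR : 0 < R) (A U G : ℝ≥0∞)
    (h0 : U = 0 → A = 0)
    (h : ∀ ε : ℝ, 0 < ε → ε ≤ R →
      A ≤ C * (ENNReal.ofReal (ε ^ (α * p)) * G + ENNReal.ofReal (ε ^ (-p)) * U)) :
    A ^ (1 / p) ≤ ENNReal.ofReal ((((2 * C) ^ (1 / p)).toReal + 1) / R) * U ^ (1 / p) +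
      ENNReal.ofReal (((2 * C) ^ (1 / p)).toReal + 1) * (U ^ (1 / p)) ^ (α / (1 + α)) *
        (G ^ (1 / p)) ^ (1 / (1 + α)) := by
  have hp0 : 0 < p := by linarith
  have hpi : 0 < 1 / p := by positivity
  set c := ((2 * C) ^ (1 / p)).toReal + 1 with hc
  have hc0 : 0 < c := by positivity
  have hCc : (2 * C) ^ (1 / p) ≤ ENNReal.ofReal c := by
    rw [← ENNReal.ofReal_toReal (a := (2 * C) ^ (1 / p)) (by finiteness)]
    exact ENNReal.ofReal_le_ofReal (by rw [hc]; linarith)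
  by_cases hU0 : U = 0
  · rw [h0 hU0, ENNReal.zero_rpow_of_pos hpi]; exact zero_le
  by_cases hUt : U = ⊤
  · rw [hUt, ENNReal.top_rpow_of_pos hpi, ENNReal.mul_top (by simp; positivity), top_add]
    exact le_top
  by_cases hGt : G = ⊤
  · rw [hGt, ENNReal.top_rpow_of_pos hpi, ENNReal.top_rpow_of_pos (by positivity),
      ENNReal.mul_top, add_top]
    · exact le_top
    · refine mul_ne_zero (by simpa using hc0) ?_
      refine (ENNReal.rpow_pos (ENNReal.rpow_pos (pos_iff_ne_zero.2 hU0) hUt) ?_).ne'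
      finiteness
  set a := (U ^ (1 / p)).toReal with ha
  set b := (G ^ (1 / p)).toReal with hb
  have hUa : U ^ (1 / p) = ENNReal.ofReal a := (ENNReal.ofReal_toReal (by finiteness)).symm
  have hGb : G ^ (1 / p) = ENNReal.ofReal b := (ENNReal.ofReal_toReal (by finiteness)).symm
  have ha0 : 0 < a := ENNReal.toReal_pos
    (ENNReal.rpow_pos (pos_iff_ne_zero.2 hU0) hUt).ne' (by finiteness)
  have hb0 : 0 ≤ b := ENNReal.toReal_nonneg
  have hU' : U = ENNReal.ofReal (a ^ p) := by
    rw [← ENNReal.ofReal_rpow_of_nonneg ha0.le hp0.le, ← hUa, ← ENNReal.rpow_mul,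
      one_div_mul_cancel hp0.ne', ENNReal.rpow_one]
  have hG' : G = ENNReal.ofReal (b ^ p) := by
    rw [← ENNReal.ofReal_rpow_of_nonneg hb0 hp0.le, ← hGb, ← ENNReal.rpow_mul,
      one_div_mul_cancel hp0.ne', ENNReal.rpow_one]
  have gen : ∀ ε M : ℝ, 0 < ε → ε ≤ R → ε ^ α * b ≤ M → a / ε ≤ M →
      A ^ (1 / p) ≤ ENNReal.ofReal c * ENNReal.ofReal M := by
    intro ε M hε hεR h1 h2
    have hM : 0 ≤ M := le_trans (by positivity) h2
    have k1 : ENNReal.ofReal (ε ^ (α * p)) * G ≤ ENNReal.ofReal (M ^ p) := by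
      rw [hG', ← ENNReal.ofReal_mul (by positivity), Real.rpow_mul hε.le,
        ← Real.mul_rpow (by positivity) hb0]
      gcongr
    have k2 : ENNReal.ofReal (ε ^ (-p)) * U ≤ ENNReal.ofReal (M ^ p) := by
      rw [hU', ← ENNReal.ofReal_mul (by positivity), Real.rpow_neg hε.le,
        ← Real.inv_rpow hε.le, ← Real.mul_rpow (by positivity) ha0.le, inv_mul_eq_div]
      gcongr
    have k3 : A ≤ (2 * C) * ENNReal.ofReal (M ^ p) := by
      refine (h ε hε hεR).trans ?_
      calc _ ≤ C * (ENNReal.ofReal (M ^ p) + ENNReal.ofReal (M ^ p)) := by gcongr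
        _ = _ := by ring
    calc A ^ (1 / p) ≤ ((2 * C) * ENNReal.ofReal (M ^ p)) ^ (1 / p) := by gcongr
      _ = (2 * C) ^ (1 / p) * ENNReal.ofReal M := by
        rw [ENNReal.mul_rpow_of_nonneg _ _ hpi.le, ENNReal.ofReal_rpow_of_nonneg (by positivity)
          hpi.le, ← Real.rpow_mul hM, mul_one_div_cancel hp0.ne', Real.rpow_one]
      _ ≤ _ := by gcongr
  by_cases hcase : R ^ α * b ≤ a / R
  · refine (gen R (a / R) hR le_rfl hcase le_rfl).trans (le_trans (le_of_eq ?_) le_self_add)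
    rw [hUa, ← ENNReal.ofReal_mul hc0.le, ← ENNReal.ofReal_mul (by positivity)]
    congr 1; ring
  · push Not at hcase
    have hb1 : 0 < b := by
      rcases hb0.lt_or_eq with h | h
      · exact h
      · rw [← h, mul_zero] at hcase
        exact absurd hcase (not_lt.2 (by positivity))
    have hα' : 0 < 1 + α := by linarith
    set ε := (a / b) ^ (1 / (1 + α)) with hε
    have hεp : 0 < ε := by positivity
    have hε1 : ε ^ (1 + α) = a / b := by
      rw [hε, ← Real.rpow_mul (by positivity), one_div_mul_cancel hα'.ne', Real.rpow_one]
    have hεR : ε ≤ R := by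
      by_contra hlt
      push Not at hlt
      have h1 : R ^ (1 + α) < ε ^ (1 + α) := Real.rpow_lt_rpow hR.le hlt hα'
      rw [hε1, Real.rpow_add hR, Real.rpow_one, lt_div_iff₀ hb1] at h1
      rw [div_lt_iff₀ hR] at hcase
      nlinarith
    have hab : a / ε = ε ^ α * b := by
      rw [Real.rpow_add hεp, Real.rpow_one] at hε1
      field_simp at hε1 ⊢
      linarith
    have hM : a / ε = a ^ (α / (1 + α)) * b ^ (1 / (1 + α)) := by
      rw [hε, Real.div_rpow ha0.le hb1.le]
      have : a = a ^ (α / (1 + α)) * a ^ (1 / (1 + α)) := by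
        rw [← Real.rpow_add ha0]
        have : α / (1 + α) + 1 / (1 + α) = 1 := by field_simp; ring
        rw [this, Real.rpow_one]
      rw [div_div_eq_mul_div, div_eq_iff (by positivity)]
      nth_rw 1 [this]; ring
    refine (gen ε (a / ε) hεp hεR hab.ge le_rfl).trans (le_trans (le_of_eq ?_) le_add_self)
    rw [hM, hUa, hGb, ENNReal.ofReal_rpow_of_nonneg ha0.le (by positivity),
      ENNReal.ofReal_rpow_of_nonneg hb0 (by positivity), mul_assoc,
      ENNReal.ofReal_mul (by positivity)]

theorem gagliardo_nirenberg_gradient (n : ℕ) (p α : ℝ) (hp : 1 < p) (hα₁ : 0 < α) (hα₂ : α < 1) :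
    ∃ c : ℝ, 0 < c ∧
      ∀ (R : ℝ) (x₀ : EuclideanSpace ℝ (Fin n)) (u : EuclideanSpace ℝ (Fin n) → ℝ), 0 < R →
        (∃ V : Set (EuclideanSpace ℝ (Fin n)), IsOpen V ∧ closedBall x₀ R ⊆ V ∧
          ContDiffOn ℝ 1 u V) →
        (∫⁻ x in ball x₀ R, ENNReal.ofReal (‖gradient u x‖ ^ p)) ^ (1 / p) ≤
          ENNReal.ofReal (c / R) *
              (∫⁻ x in ball x₀ R, ENNReal.ofReal (|u x| ^ p)) ^ (1 / p) +
            ENNReal.ofReal c *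
              ((∫⁻ x in ball x₀ R, ENNReal.ofReal (|u x| ^ p)) ^ (1 / p)) ^ (α / (1 + α)) *
              gagliardoGradE n α p (ball x₀ R) u ^ (1 / (1 + α)) := by
  obtain ⟨C, hC, H⟩ := global_aux n p α hp hα₁
  refine ⟨((2 * C) ^ (1 / p)).toReal + 1, by positivity, ?_⟩
  intro R x₀ u hR hV
  obtain ⟨V, -, hBV, hu⟩ := hV
  have hu' : ContDiffOn ℝ 1 u (ball x₀ R) := hu.mono (ball_subset_closedBall.trans hBV)
  exact numeric_aux p α hp hα₁ C hC R hR _ _ _ (zero_aux n p hp R x₀ u hu') (H R x₀ u hR hu')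
end
end

section
/- Let n∈ℕ, p ≥ 1 and 0 < s_o ≤ s < 1. Then there exists a constant c = c(n,p,s_o) ≥ 1 such that for every R>0, every x_o∈ℝⁿ and every u∈L^p(B_R(x_o)) one has ⨍_{B_R(x_o)} |u−(u)_{B_R(x_o)}|^p dx ≤ c (1−s) R^{sp} ⨍_{B_R(x_o)} ∫_{B_R(x_o)} |u(x)−u(y)|^p/|x−y|^{n+sp} dx dy, where ⨍_{B_R}∫_{B_R} denotes |B_R|^{−1} times the double integral over B_R×B_R (the inequality being interpreted as trivially true if the right-hand side is infinite). -/
open MeasureTheory Metric Set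
open scoped ENNReal

noncomputable section

lemma fp_cov {n : ℕ} (F : EuclideanSpace ℝ (Fin n) → EuclideanSpace ℝ (Fin n) → ℝ≥0∞)
    (hF : Measurable (Function.uncurry F)) (k : ℕ) (hk : 0 < k) (i : ℕ) :
    ∫⁻ x, ∫⁻ y, F (x + ((i : ℝ) / k) • (y - x)) (x + (((i + 1 : ℕ) : ℝ) / k) • (y - x)) =
      ENNReal.ofReal ((k : ℝ) ^ n) * ∫⁻ x, ∫⁻ y, F x y := by
  have hk' : (0 : ℝ) < k := by exact_mod_cast hk
  have hk0 : (k : ℝ) ≠ 0 := hk'.ne'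
  have scal : ∀ G : EuclideanSpace ℝ (Fin n) → ℝ≥0∞, Measurable G →
      ∫⁻ h, G ((k : ℝ)⁻¹ • h) = ENNReal.ofReal ((k : ℝ) ^ n) * ∫⁻ h, G h := by
    intro G hG
    have h1 := Measure.map_addHaar_smul (volume : Measure (EuclideanSpace ℝ (Fin n)))
      (inv_ne_zero hk0)
    have h2 : ∫⁻ h, G ((k : ℝ)⁻¹ • h) =
        ∫⁻ h, G h ∂(Measure.map ((k : ℝ)⁻¹ • ·) (volume : Measure (EuclideanSpace ℝ (Fin n)))) := by
      rw [lintegral_map hG (by fun_prop)]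
    rw [h2, h1, lintegral_smul_measure]
    simp [abs_of_pos hk']
  have m1 : ∀ x, Measurable fun h : EuclideanSpace ℝ (Fin n) =>
      F (x + (i : ℝ) • h) (x + ((i + 1 : ℕ) : ℝ) • h) := by
    intro x
    exact hF.comp (f := fun h : EuclideanSpace ℝ (Fin n) =>
      (x + (i : ℝ) • h, x + ((i + 1 : ℕ) : ℝ) • h)) (by fun_prop)
  have step1 : ∀ x, ∫⁻ y, F (x + ((i : ℝ) / k) • (y - x)) (x + (((i + 1 : ℕ) : ℝ) / k) • (y - x)) =
      ENNReal.ofReal ((k : ℝ) ^ n) * ∫⁻ h, F (x + (i : ℝ) • h) (x + ((i + 1 : ℕ) : ℝ) • h) := by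
    intro x
    rw [← scal _ (m1 x)]
    rw [← lintegral_sub_right_eq_self (fun h => F (x + (i : ℝ) • ((k : ℝ)⁻¹ • h))
      (x + ((i + 1 : ℕ) : ℝ) • ((k : ℝ)⁻¹ • h))) x]
    simp only [smul_smul, div_eq_mul_inv]
  simp_rw [step1]
  rw [lintegral_const_mul']
  swap
  · exact ENNReal.ofReal_ne_top
  congr 1
  rw [lintegral_lintegral_swap]
  swap
  · exact (hF.comp (f := fun z : EuclideanSpace ℝ (Fin n) × EuclideanSpace ℝ (Fin n) =>
      (z.1 + (i : ℝ) • z.2, z.1 + ((i + 1 : ℕ) : ℝ) • z.2)) (by fun_prop)).aemeasurable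
  have step2 : ∀ h : EuclideanSpace ℝ (Fin n),
      ∫⁻ x, F (x + (i : ℝ) • h) (x + ((i + 1 : ℕ) : ℝ) • h) = ∫⁻ x, F x (x + h) := by
    intro h
    rw [← lintegral_add_right_eq_self (fun x => F x (x + h)) ((i : ℝ) • h)]
    refine lintegral_congr fun x => ?_
    congr 1
    push_cast
    rw [add_smul, one_smul, add_assoc]
  simp_rw [step2]
  rw [lintegral_lintegral_swap]
  swap
  · exact (hF.comp (f := fun z : EuclideanSpace ℝ (Fin n) × EuclideanSpace ℝ (Fin n) =>
      (z.2, z.2 + z.1)) (by fun_prop)).aemeasurable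
  refine lintegral_congr fun x => ?_
  exact lintegral_add_left_eq_self (fun y => F x y) x

/-- The difference kernel truncated to the ball and to distances `< r`. -/
def fpK {n : ℕ} (p : ℝ) (u : EuclideanSpace ℝ (Fin n) → ℝ) (x₀ : EuclideanSpace ℝ (Fin n))
    (R r : ℝ) (x y : EuclideanSpace ℝ (Fin n)) : ℝ≥0∞ :=
  {z : EuclideanSpace ℝ (Fin n) × EuclideanSpace ℝ (Fin n) |
    z.1 ∈ ball x₀ R ∧ z.2 ∈ ball x₀ R ∧ dist z.1 z.2 < r}.indicator
      (fun z => ENNReal.ofReal (|u z.1 - u z.2| ^ p)) (x, y)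

lemma fpK_meas {n : ℕ} (p : ℝ) (u : EuclideanSpace ℝ (Fin n) → ℝ) (hu : Measurable u)
    (x₀ : EuclideanSpace ℝ (Fin n)) (R r : ℝ) :
    Measurable (Function.uncurry (fpK p u x₀ R r)) := by
  have : Function.uncurry (fpK p u x₀ R r) =
    {z : EuclideanSpace ℝ (Fin n) × EuclideanSpace ℝ (Fin n) |
    z.1 ∈ ball x₀ R ∧ z.2 ∈ ball x₀ R ∧ dist z.1 z.2 < r}.indicator
      (fun z => ENNReal.ofReal (|u z.1 - u z.2| ^ p)) := by
    ext ⟨x, y⟩; rfl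
  rw [this]
  refine Measurable.indicator ?_ ?_
  · refine ENNReal.measurable_ofReal.comp (Measurable.pow_const ?_ p)
    exact (_root_.continuous_abs.measurable).comp
      ((hu.comp measurable_fst).sub (hu.comp measurable_snd))
  · refine (measurable_fst measurableSet_ball).inter ((measurable_snd measurableSet_ball).inter ?_)
    exact measurableSet_lt (measurable_fst.dist measurable_snd) measurable_const

lemma fp_chain {n : ℕ} (p : ℝ) (hp : 1 ≤ p) (u : EuclideanSpace ℝ (Fin n) → ℝ)
    (hu : Measurable u) (x₀ : EuclideanSpace ℝ (Fin n)) (R : ℝ) (k : ℕ) (hk : 0 < k) :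
    ∫⁻ x in ball x₀ R, ∫⁻ y in ball x₀ R, ENNReal.ofReal (|u x - u y| ^ p) ≤
      ENNReal.ofReal ((k : ℝ) ^ (p + n)) * ∫⁻ x, ∫⁻ y, fpK p u x₀ R (2 * R / k) x y := by
  have hk' : (0 : ℝ) < k := by exact_mod_cast hk
  obtain ⟨P, hP⟩ : ∃ P : ℕ → EuclideanSpace ℝ (Fin n) → EuclideanSpace ℝ (Fin n) →
      EuclideanSpace ℝ (Fin n), P = fun (i : ℕ) x y => x + ((i : ℝ) / k) • (y - x) := ⟨_, rfl⟩
  have key : ∀ x ∈ ball x₀ R, ∀ y ∈ ball x₀ R, ENNReal.ofReal (|u x - u y| ^ p) ≤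
      ENNReal.ofReal ((k : ℝ) ^ (p - 1)) *
        ∑ i ∈ Finset.range k, fpK p u x₀ R (2 * R / k) (P i x y) (P (i + 1) x y) := by
    intro x hx y hy
    have hmem : ∀ i ≤ k, P i x y ∈ ball x₀ R := by
      intro i hi
      have := (convex_ball x₀ R).add_smul_sub_mem hx hy (t := (i : ℝ) / k)
        ⟨by positivity, by rw [div_le_one hk']; exact_mod_cast hi⟩
      rw [hP]
      exact this
    have hd : ∀ i, dist (P i x y) (P (i + 1) x y) < 2 * R / k := by
      intro i
      have e : P i x y - P (i + 1) x y = (-(1 / (k : ℝ))) • (y - x) := by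
        simp only [hP]
        rw [add_sub_add_left_eq_sub, ← sub_smul]
        congr 1
        push_cast
        field_simp
        ring
      rw [dist_eq_norm, e, norm_smul, norm_neg, Real.norm_of_nonneg (by positivity),
        ← dist_eq_norm, one_div_mul_eq_div]
      have h3 : dist y x < 2 * R := by
        have := dist_triangle_right y x x₀
        rw [mem_ball] at hx hy
        linarith
      gcongr
    have hval : ∀ i ∈ Finset.range k, fpK p u x₀ R (2 * R / k) (P i x y) (P (i + 1) x y) =
        ENNReal.ofReal (|u (P i x y) - u (P (i + 1) x y)| ^ p) := by
      intro i hi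
      rw [Finset.mem_range] at hi
      unfold fpK
      rw [Set.indicator_of_mem]
      exact ⟨hmem i hi.le, hmem (i + 1) hi, hd i⟩
    rw [Finset.sum_congr rfl hval, ← ENNReal.ofReal_sum_of_nonneg (fun i _ => by positivity),
      ← ENNReal.ofReal_mul (by positivity)]
    apply ENNReal.ofReal_le_ofReal
    have h4 := Real.rpow_sum_le_const_mul_sum_rpow (Finset.range k)
      (fun i => u (P i x y) - u (P (i + 1) x y)) hp
    rw [Finset.card_range] at h4
    refine le_trans ?_ h4
    have h5 : u x - u y = ∑ i ∈ Finset.range k, (u (P i x y) - u (P (i + 1) x y)) := by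
      rw [Finset.sum_range_sub' (fun i => u (P i x y))]
      simp [hP, hk'.ne']
    rw [h5]
    exact Real.rpow_le_rpow (abs_nonneg _) (Finset.abs_sum_le_sum_abs _ _) (by linarith)
  have mK : ∀ i, Measurable (fun z : EuclideanSpace ℝ (Fin n) × EuclideanSpace ℝ (Fin n) =>
      fpK p u x₀ R (2 * R / k) (P i z.1 z.2) (P (i + 1) z.1 z.2)) := by
    intro i
    exact (fpK_meas p u hu x₀ R (2 * R / k)).comp
      (f := fun z : EuclideanSpace ℝ (Fin n) × EuclideanSpace ℝ (Fin n) =>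
        (P i z.1 z.2, P (i + 1) z.1 z.2)) (by simp only [hP]; fun_prop)
  calc _ ≤ ∫⁻ x in ball x₀ R, ∫⁻ y in ball x₀ R, ENNReal.ofReal ((k : ℝ) ^ (p - 1)) *
        ∑ i ∈ Finset.range k, fpK p u x₀ R (2 * R / k) (P i x y) (P (i + 1) x y) :=
        setLIntegral_mono' measurableSet_ball fun x hx =>
          setLIntegral_mono' measurableSet_ball fun y hy => key x hx y hy
    _ ≤ ∫⁻ x, ∫⁻ y, ENNReal.ofReal ((k : ℝ) ^ (p - 1)) *
        ∑ i ∈ Finset.range k, fpK p u x₀ R (2 * R / k) (P i x y) (P (i + 1) x y) :=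
        (setLIntegral_le_lintegral _ _).trans
          (lintegral_mono fun x => setLIntegral_le_lintegral _ _)
    _ = ENNReal.ofReal ((k : ℝ) ^ (p - 1)) * ∑ i ∈ Finset.range k,
        ∫⁻ x, ∫⁻ y, fpK p u x₀ R (2 * R / k) (P i x y) (P (i + 1) x y) := by
        rw [← lintegral_finsetSum _ (fun i _ => (mK i).lintegral_prod_right'),
          ← lintegral_const_mul' _ _ ENNReal.ofReal_ne_top]
        refine lintegral_congr fun x => ?_
        rw [lintegral_const_mul' _ _ ENNReal.ofReal_ne_top, lintegral_finsetSum]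
        intro i _
        have hm := (mK i).comp (f := fun y : EuclideanSpace ℝ (Fin n) => (x, y))
          measurable_prodMk_left
        exact hm
    _ = _ := by
        have : ∀ i ∈ Finset.range k,
            ∫⁻ x, ∫⁻ y, fpK p u x₀ R (2 * R / k) (P i x y) (P (i + 1) x y) =
            ENNReal.ofReal ((k : ℝ) ^ n) * ∫⁻ x, ∫⁻ y, fpK p u x₀ R (2 * R / k) x y :=
          fun i _ => by
            rw [hP]
            exact fp_cov _ (fpK_meas p u hu x₀ R _) k hk i
        rw [Finset.sum_congr rfl this, Finset.sum_const, Finset.card_range, nsmul_eq_mul,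
          ← mul_assoc, ← mul_assoc]
        congr 1
        rw [← ENNReal.ofReal_natCast, ← ENNReal.ofReal_mul (by positivity),
          ← ENNReal.ofReal_mul (by positivity)]
        congr 1
        rw [← Real.rpow_natCast (k : ℝ) n]
        nth_rewrite 2 [← Real.rpow_one (k : ℝ)]
        rw [← Real.rpow_add hk', ← Real.rpow_add hk']
        congr 1
        ring

lemma fp_tele (q : ℝ) (hq : 0 < q) (N : ℕ) :
    (1 - ((N : ℝ) + 1) ^ (-q)) / q ≤
      ∑ k ∈ Finset.range N, ((k : ℝ) + 1) ^ (-q - 1) := by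
  induction N with
  | zero => simp
  | succ N ih =>
    rw [Finset.sum_range_succ]
    have hN : (0 : ℝ) < (N : ℝ) + 1 := by positivity
    have h1 : ((N : ℝ) + 1) ^ (-q) - ((N : ℝ) + 1 + 1) ^ (-q) ≤ q * ((N : ℝ) + 1) ^ (-q - 1) := by
      have e : (N : ℝ) + 1 + 1 = (N + 1) * (1 + 1 / ((N : ℝ) + 1)) := by field_simp
      have hp1 : 0 < 1 + 1 / ((N : ℝ) + 1) := by positivity
      rw [e, Real.mul_rpow hN.le hp1.le, Real.rpow_sub_one hN.ne']
      have h2 : 1 - q / ((N : ℝ) + 1) ≤ (1 + 1 / ((N : ℝ) + 1)) ^ (-q) := by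
        rw [Real.rpow_def_of_pos hp1]
        have h3 := Real.add_one_le_exp (Real.log (1 + 1 / ((N : ℝ) + 1)) * -q)
        have h4 := Real.log_le_sub_one_of_pos hp1
        have h5 : q / ((N : ℝ) + 1) = q * (1 / ((N : ℝ) + 1)) := by ring
        rw [h5]
        nlinarith
      have h6 : 0 < ((N : ℝ) + 1) ^ (-q) := by positivity
      have h7 := mul_le_mul_of_nonneg_left h2 h6.le
      have h8 : q * (((N : ℝ) + 1) ^ (-q) / ((N : ℝ) + 1)) =
        ((N : ℝ) + 1) ^ (-q) * (q / ((N : ℝ) + 1)) := by ring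
      rw [h8]
      linarith
    rw [div_le_iff₀ hq] at ih ⊢
    push_cast
    linarith

lemma fp_point {n : ℕ} (hn : 1 ≤ n) (p s : ℝ) (hp : 1 ≤ p) (hs : 0 < s)
    (u : EuclideanSpace ℝ (Fin n) → ℝ)
    (x₀ : EuclideanSpace ℝ (Fin n)) (R : ℝ) (hR : 0 < R) (N : ℕ)
    (x y : EuclideanSpace ℝ (Fin n)) :
    ∑ k ∈ Finset.range N, ENNReal.ofReal (((k : ℝ) + 1) ^ ((n : ℝ) + s * p - 1)) *
        fpK p u x₀ R (2 * R / ((k + 1 : ℕ) : ℝ)) x y ≤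
      (ball x₀ R).indicator (fun x => (ball x₀ R).indicator (fun y =>
        ENNReal.ofReal ((2 * R) ^ ((n : ℝ) + s * p)) *
        ENNReal.ofReal (|u x - u y| ^ p / dist x y ^ ((n : ℝ) + s * p))) y) x := by
  by_cases hx : x ∈ ball x₀ R
  swap
  · rw [Finset.sum_eq_zero]
    · simp
    intro k _
    simp only [mul_eq_zero]
    right
    exact Set.indicator_of_notMem (fun h => hx h.1) _
  by_cases hy : y ∈ ball x₀ R
  swap
  · rw [Finset.sum_eq_zero]
    · simp
    intro k _
    simp only [mul_eq_zero]
    right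
    exact Set.indicator_of_notMem (fun h => hy h.2.1) _
  rw [Set.indicator_of_mem hx, Set.indicator_of_mem hy]
  set a := (n : ℝ) + s * p with ha
  have hn' : (1 : ℝ) ≤ n := by exact_mod_cast hn
  have hsp : 0 < s * p := by positivity
  rcases eq_or_ne x y with rfl | hxy
  · rw [Finset.sum_eq_zero]
    · simp
    intro k _
    simp only [mul_eq_zero]
    right
    unfold fpK
    apply Set.indicator_apply_eq_zero.2
    intro _
    have : p ≠ 0 := by linarith
    simp [Real.zero_rpow this]
  have hd : 0 < dist x y := dist_pos.2 hxy
  set t := 2 * R / dist x y with ht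
  have htpos : 0 < t := by positivity
  have hterm : ∀ k ∈ Finset.range N, ENNReal.ofReal (((k : ℝ) + 1) ^ (a - 1)) *
        fpK p u x₀ R (2 * R / ((k + 1 : ℕ) : ℝ)) x y ≤
        (if k ∈ Finset.range ⌊t⌋₊ then ENNReal.ofReal (t ^ (a - 1) * |u x - u y| ^ p) else 0) := by
    intro k _
    by_cases hk : dist x y < 2 * R / ((k + 1 : ℕ) : ℝ)
    · have hkt : (k : ℝ) + 1 < t := by
        rw [ht, lt_div_iff₀ hd]
        rw [lt_div_iff₀ (by positivity)] at hk
        push_cast at hk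
        linarith
      have hkm : k ∈ Finset.range ⌊t⌋₊ := by
        rw [Finset.mem_range, ← Nat.succ_le_iff, Nat.le_floor_iff htpos.le]
        push_cast
        exact hkt.le
      rw [if_pos hkm, ENNReal.ofReal_mul (by positivity)]
      gcongr
      · linarith
      · exact Set.indicator_le_self _ _ (x, y)
    · have : fpK p u x₀ R (2 * R / ((k + 1 : ℕ) : ℝ)) x y = 0 :=
        Set.indicator_of_notMem (fun h => hk h.2.2) _
      rw [this, mul_zero]
      exact zero_le
  refine (Finset.sum_le_sum hterm).trans ?_
  rw [← Finset.sum_filter, Finset.sum_const, nsmul_eq_mul]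
  have hcard : ((Finset.filter (· ∈ Finset.range ⌊t⌋₊) (Finset.range N)).card : ℝ) ≤ t := by
    have h1 : (Finset.filter (· ∈ Finset.range ⌊t⌋₊) (Finset.range N)).card ≤ ⌊t⌋₊ := by
      conv_rhs => rw [← Finset.card_range ⌊t⌋₊]
      exact Finset.card_le_card fun k hk => (Finset.mem_filter.1 hk).2
    exact (Nat.cast_le.2 h1).trans (Nat.floor_le htpos.le)
  rw [← ENNReal.ofReal_natCast, ← ENNReal.ofReal_mul (by positivity),
    ← ENNReal.ofReal_mul (by positivity)]
  apply ENNReal.ofReal_le_ofReal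
  have e : (2 * R) ^ a * (|u x - u y| ^ p / dist x y ^ a) = t * (t ^ (a - 1) * |u x - u y| ^ p) := by
    rw [← mul_assoc, Real.rpow_sub_one htpos.ne', mul_div_cancel₀ _ htpos.ne', ht,
      Real.div_rpow (by positivity) hd.le]
    ring
  rw [e]
  gcongr

lemma fp_double {n : ℕ} (hn : 1 ≤ n) (p s : ℝ) (hp : 1 ≤ p) (hs : 0 < s) (hs1 : s < 1)
    (u : EuclideanSpace ℝ (Fin n) → ℝ) (hu : Measurable u)
    (x₀ : EuclideanSpace ℝ (Fin n)) (R : ℝ) (hR : 0 < R) :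
    ∫⁻ x in ball x₀ R, ∫⁻ y in ball x₀ R, ENNReal.ofReal (|u x - u y| ^ p) ≤
      ENNReal.ofReal (p * (1 - s) * (2 * R) ^ ((n : ℝ) + s * p)) *
        gagliardoE n s p (ball x₀ R) u := by
  set A := ∫⁻ x in ball x₀ R, ∫⁻ y in ball x₀ R, ENNReal.ofReal (|u x - u y| ^ p) with hA
  set q := p * (1 - s) with hq
  have hq0 : 0 < q := mul_pos (by linarith) (by linarith)
  set G := gagliardoE n s p (ball x₀ R) u with hG
  have hN : ∀ N : ℕ, A * ENNReal.ofReal ((1 - ((N : ℝ) + 1) ^ (-q)) / q) ≤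
      ENNReal.ofReal ((2 * R) ^ ((n : ℝ) + s * p)) * G := by
    intro N
    calc _ ≤ A * ∑ k ∈ Finset.range N, ENNReal.ofReal (((k : ℝ) + 1) ^ (-q - 1)) := by
          gcongr
          rw [← ENNReal.ofReal_sum_of_nonneg (fun i _ => by positivity)]
          exact ENNReal.ofReal_le_ofReal (fp_tele q hq0 N)
      _ ≤ ∑ k ∈ Finset.range N, ENNReal.ofReal (((k : ℝ) + 1) ^ ((n : ℝ) + s * p - 1)) *
            ∫⁻ x, ∫⁻ y, fpK p u x₀ R (2 * R / ((k + 1 : ℕ) : ℝ)) x y := by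
          rw [Finset.mul_sum]
          refine Finset.sum_le_sum fun k _ => ?_
          have h1 := fp_chain p hp u hu x₀ R (k + 1) k.succ_pos
          have hk : (0 : ℝ) < (k : ℝ) + 1 := by positivity
          have e : ((k : ℝ) + 1) ^ ((n : ℝ) + s * p - 1) =
              ((k : ℝ) + 1) ^ (-q - 1) * (((k + 1 : ℕ) : ℝ)) ^ (p + n) := by
            push_cast
            rw [← Real.rpow_add hk]
            congr 1
            rw [hq]; ring
          rw [e, ENNReal.ofReal_mul (by positivity), mul_comm, mul_assoc]
          gcongr
      _ = ∫⁻ x, ∫⁻ y, ∑ k ∈ Finset.range N,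
            ENNReal.ofReal (((k : ℝ) + 1) ^ ((n : ℝ) + s * p - 1)) *
              fpK p u x₀ R (2 * R / ((k + 1 : ℕ) : ℝ)) x y := by
          have mK : ∀ r, Measurable (fun z : EuclideanSpace ℝ (Fin n) × EuclideanSpace ℝ (Fin n) =>
              fpK p u x₀ R r z.1 z.2) := fun r => fpK_meas p u hu x₀ R r
          have e1 : ∀ x, ∫⁻ y, ∑ k ∈ Finset.range N,
            ENNReal.ofReal (((k : ℝ) + 1) ^ ((n : ℝ) + s * p - 1)) *
              fpK p u x₀ R (2 * R / ((k + 1 : ℕ) : ℝ)) x y =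
              ∑ k ∈ Finset.range N, ENNReal.ofReal (((k : ℝ) + 1) ^ ((n : ℝ) + s * p - 1)) *
              ∫⁻ y, fpK p u x₀ R (2 * R / ((k + 1 : ℕ) : ℝ)) x y := by
            intro x
            rw [lintegral_finsetSum]
            · refine Finset.sum_congr rfl fun k _ => ?_
              rw [lintegral_const_mul' _ _ ENNReal.ofReal_ne_top]
            · exact fun k _ => ((mK _).comp measurable_prodMk_left).const_mul _
          simp_rw [e1]
          rw [lintegral_finsetSum]
          · refine Finset.sum_congr rfl fun k _ => ?_
            rw [lintegral_const_mul' _ _ ENNReal.ofReal_ne_top]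
          · exact fun k _ => ((mK _).lintegral_prod_right').const_mul _
      _ ≤ ∫⁻ x, ∫⁻ y, (ball x₀ R).indicator (fun x => (ball x₀ R).indicator (fun y =>
        ENNReal.ofReal ((2 * R) ^ ((n : ℝ) + s * p)) *
        ENNReal.ofReal (|u x - u y| ^ p / dist x y ^ ((n : ℝ) + s * p))) y) x :=
          lintegral_mono fun x => lintegral_mono fun y => fp_point hn p s hp hs u x₀ R hR N x y
      _ = _ := by
          rw [hG, gagliardoE, ← lintegral_const_mul' _ _ ENNReal.ofReal_ne_top,
            ← lintegral_indicator measurableSet_ball]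
          refine lintegral_congr fun x => ?_
          by_cases hx : x ∈ ball x₀ R
          · simp only [Set.indicator_of_mem hx]
            rw [lintegral_indicator measurableSet_ball,
              lintegral_const_mul' _ _ ENNReal.ofReal_ne_top]
          · simp [Set.indicator_of_notMem hx]
  have hlim : Filter.Tendsto (fun N : ℕ => A * ENNReal.ofReal ((1 - ((N : ℝ) + 1) ^ (-q)) / q))
      Filter.atTop (nhds (A * ENNReal.ofReal ((1 - 0) / q))) := by
    refine ENNReal.Tendsto.const_mul ?_ (Or.inl ?_)
    · refine ENNReal.tendsto_ofReal ?_
      refine Filter.Tendsto.div_const (Filter.Tendsto.sub tendsto_const_nhds ?_) _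
      refine (tendsto_rpow_neg_atTop hq0).comp ?_
      exact Filter.tendsto_atTop_add_const_right _ _ tendsto_natCast_atTop_atTop
    · simp [hq0]
  have hfin := le_of_tendsto' hlim hN
  have e2 : A = ENNReal.ofReal q * (A * ENNReal.ofReal ((1 - 0) / q)) := by
    rw [mul_left_comm, ← ENNReal.ofReal_mul hq0.le]
    have : q * ((1 - 0) / q) = 1 := by field_simp; ring
    rw [this]; simp
  rw [e2, ENNReal.ofReal_mul hq0.le, mul_assoc]
  gcongr

lemma fp_jensen {n : ℕ} (p : ℝ) (hp : 1 ≤ p)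
    (u : EuclideanSpace ℝ (Fin n) → ℝ) (hu : Measurable u)
    (x₀ : EuclideanSpace ℝ (Fin n)) (R : ℝ) (hR : 0 < R)
    (hint : (∫⁻ x in ball x₀ R, ENNReal.ofReal (|u x| ^ p)) < ⊤) (x : EuclideanSpace ℝ (Fin n)) :
    ENNReal.ofReal (|u x - ⨍ y in ball x₀ R, u y| ^ p) ≤
      (volume (ball x₀ R))⁻¹ * ∫⁻ y in ball x₀ R, ENNReal.ofReal (|u x - u y| ^ p) := by
  have hp0 : 0 < p := by linarith
  have conv : ∀ a : ℝ, ENNReal.ofReal (|a| ^ p) = ‖a‖ₑ ^ p := by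
    intro a
    rw [← ENNReal.ofReal_rpow_of_nonneg (abs_nonneg _) hp0.le, Real.enorm_eq_ofReal_abs]
  simp_rw [conv] at hint ⊢
  have hv0 : volume (ball x₀ R) ≠ 0 := (measure_ball_pos volume x₀ hR).ne'
  have hvt : volume (ball x₀ R) ≠ ⊤ := measure_ball_lt_top.ne
  set μ := (volume (ball x₀ R))⁻¹ • volume.restrict (ball x₀ R) with hμ
  have : IsProbabilityMeasure μ := ⟨by
    simp [hμ, ENNReal.inv_mul_cancel hv0 hvt]⟩
  have hp1 : (1 : ℝ≥0∞) ≤ ENNReal.ofReal p := by simpa using hp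
  have hpne : ENNReal.ofReal p ≠ 0 := by simp [hp0]
  have hmem : MemLp u (ENNReal.ofReal p) μ := by
    refine ⟨hu.aestronglyMeasurable, ?_⟩
    rw [eLpNorm_lt_top_iff_lintegral_rpow_enorm_lt_top hpne ENNReal.ofReal_ne_top,
      ENNReal.toReal_ofReal hp0.le, hμ, lintegral_smul_measure]
    exact ENNReal.mul_lt_top (ENNReal.inv_lt_top.2 (pos_iff_ne_zero.2 hv0)) hint
  have hi : Integrable u μ := hmem.integrable hp1
  have hav : ⨍ y in ball x₀ R, u y = ∫ y, u y ∂μ := by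
    rw [setAverage_eq', hμ]
  have hsub : u x - ∫ y, u y ∂μ = ∫ y, (u x - u y) ∂μ := by
    rw [integral_sub (integrable_const _) hi]
    simp
  have h1 : ‖∫ y, (u x - u y) ∂μ‖ₑ ≤ eLpNorm (fun y => u x - u y) (ENNReal.ofReal p) μ := by
    refine (enorm_integral_le_lintegral_enorm _).trans ?_
    rw [← eLpNorm_one_eq_lintegral_enorm]
    exact eLpNorm_le_eLpNorm_of_exponent_le hp1 (by fun_prop)
  rw [hav, hsub]
  calc _ ≤ (eLpNorm (fun y => u x - u y) (ENNReal.ofReal p) μ) ^ p := by gcongr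
    _ = ∫⁻ y, ‖u x - u y‖ₑ ^ p ∂μ := by
      rw [eLpNorm_eq_lintegral_rpow_enorm_toReal hpne ENNReal.ofReal_ne_top,
        ENNReal.toReal_ofReal hp0.le, ← ENNReal.rpow_mul, one_div_mul_cancel hp0.ne',
        ENNReal.rpow_one]
    _ = _ := by rw [hμ, lintegral_smul_measure, smul_eq_mul]

theorem fractional_poincare (n : ℕ) (p s₀ : ℝ) (hp : 1 ≤ p) (hs₀ : 0 < s₀) :
    ∃ c : ℝ, 1 ≤ c ∧
      ∀ s : ℝ, s₀ ≤ s → s < 1 →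
        ∀ (R : ℝ) (x₀ : EuclideanSpace ℝ (Fin n)) (u : EuclideanSpace ℝ (Fin n) → ℝ),
          0 < R → Measurable u →
          (∫⁻ x in ball x₀ R, ENNReal.ofReal (|u x| ^ p)) < ⊤ →
          (volume (ball x₀ R))⁻¹ *
              ∫⁻ x in ball x₀ R,
                ENNReal.ofReal (|u x - ⨍ y in ball x₀ R, u y| ^ p) ≤
            ENNReal.ofReal (c * (1 - s) * R ^ (s * p)) *
              ((volume (ball x₀ R))⁻¹ * gagliardoE n s p (ball x₀ R) u) := by
  have hp0 : 0 < p := by linarith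
  set ω := volume (ball (0 : EuclideanSpace ℝ (Fin n)) 1) with hω
  have hω0 : ω ≠ 0 := (measure_ball_pos volume _ one_pos).ne'
  have hωt : ω ≠ ⊤ := measure_ball_lt_top.ne
  have hωr : 0 < ω.toReal := ENNReal.toReal_pos hω0 hωt
  refine ⟨max 1 (p * 2 ^ ((n : ℝ) + p) / ω.toReal), le_max_left _ _, ?_⟩
  intro s hs hs1 R x₀ u hR hu hint
  have hspos : 0 < s := by linarith
  have hv0 : volume (ball x₀ R) ≠ 0 := (measure_ball_pos volume x₀ hR).ne'
  have hvt : volume (ball x₀ R) ≠ ⊤ := measure_ball_lt_top.ne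
  have hJ : ∫⁻ x in ball x₀ R, ENNReal.ofReal (|u x - ⨍ y in ball x₀ R, u y| ^ p) ≤
      (volume (ball x₀ R))⁻¹ *
        ∫⁻ x in ball x₀ R, ∫⁻ y in ball x₀ R, ENNReal.ofReal (|u x - u y| ^ p) := by
    rw [← lintegral_const_mul' _ _ (ENNReal.inv_ne_top.2 hv0)]
    exact lintegral_mono fun x => fp_jensen p hp u hu x₀ R hR hint x
  rcases Nat.eq_zero_or_pos n with hn | hn
  · subst hn
    have h0 : ∫⁻ x in ball x₀ R, ∫⁻ y in ball x₀ R, ENNReal.ofReal (|u x - u y| ^ p) = 0 := by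
      have : ∀ x y : EuclideanSpace ℝ (Fin 0), ENNReal.ofReal (|u x - u y| ^ p) = 0 := by
        intro x y
        rw [Subsingleton.elim x y]
        simp [Real.zero_rpow hp0.ne']
      simp [this]
    rw [h0, mul_zero] at hJ
    rw [le_antisymm hJ zero_le, mul_zero]
    exact zero_le
  have hD := fp_double hn p s hp hspos hs1 u hu x₀ R hR
  have hvol : volume (ball x₀ R) = ENNReal.ofReal (R ^ n * ω.toReal) := by
    rw [Measure.addHaar_ball_of_pos volume x₀ hR, finrank_euclideanSpace_fin,
      ENNReal.ofReal_mul (by positivity), ENNReal.ofReal_toReal hωt]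
  have hinv : (volume (ball x₀ R))⁻¹ = ENNReal.ofReal (R ^ n * ω.toReal)⁻¹ := by
    rw [hvol, ENNReal.ofReal_inv_of_pos (by positivity)]
  have hcoef : (volume (ball x₀ R))⁻¹ * ENNReal.ofReal (p * (1 - s) * (2 * R) ^ ((n : ℝ) + s * p)) ≤
      ENNReal.ofReal (max 1 (p * 2 ^ ((n : ℝ) + p) / ω.toReal) * (1 - s) * R ^ (s * p)) := by
    rw [hinv, ← ENNReal.ofReal_mul (by positivity)]
    apply ENNReal.ofReal_le_ofReal
    have h1s : 0 < 1 - s := by linarith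
    have e : (R ^ n * ω.toReal)⁻¹ * (p * (1 - s) * (2 * R) ^ ((n : ℝ) + s * p)) =
        (p * 2 ^ ((n : ℝ) + s * p) / ω.toReal) * (1 - s) * R ^ (s * p) := by
      rw [Real.mul_rpow (by norm_num) hR.le, Real.rpow_add hR, Real.rpow_natCast]
      field_simp
    rw [e]
    refine mul_le_mul_of_nonneg_right (mul_le_mul_of_nonneg_right ?_ h1s.le) (by positivity)
    refine le_trans ?_ (le_max_right _ _)
    have : (2 : ℝ) ^ ((n : ℝ) + s * p) ≤ 2 ^ ((n : ℝ) + p) := by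
      apply Real.rpow_le_rpow_of_exponent_le (by norm_num)
      nlinarith
    gcongr
  calc _ ≤ (volume (ball x₀ R))⁻¹ * ((volume (ball x₀ R))⁻¹ *
        (ENNReal.ofReal (p * (1 - s) * (2 * R) ^ ((n : ℝ) + s * p)) *
        gagliardoE n s p (ball x₀ R) u)) := by
        gcongr
        exact hJ.trans (by gcongr)
    _ = ((volume (ball x₀ R))⁻¹ * ENNReal.ofReal (p * (1 - s) * (2 * R) ^ ((n : ℝ) + s * p))) *
        ((volume (ball x₀ R))⁻¹ * gagliardoE n s p (ball x₀ R) u) := by ring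
    _ ≤ _ := by gcongr
end
end

section
/- Let n∈ℕ, p ≥ 1, 0 < s_o ≤ s < 1 and γ∈(0,1]. Then there exists a constant c = c(n,s_o,p,γ) ≥ 1 such that for every R>0 and every measurable u:ℝⁿ→ℝ with u∈L^p(B_R) and with [u]_{W^{s,p}(B_R)}<∞ that satisfies u = 0 a.e. on a measurable set Ω_o ⊂ B_R with |Ω_o| ≥ γ|B_R|, one has ∫_{B_R} |u(x)|^p dx ≤ c (1−s) R^{sp} ∬_{B_R×B_R} |u(x)−u(y)|^p/|x−y|^{n+sp} dx dy. -/
open MeasureTheory Metric Set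
open scoped ENNReal

noncomputable section

/-- Truncated difference kernel. -/
def trK {n : ℕ} (p : ℝ) (u : EuclideanSpace ℝ (Fin n) → ℝ) (r : ℝ)
    (x y : EuclideanSpace ℝ (Fin n)) : ℝ≥0∞ :=
  if dist x y < r then ENNReal.ofReal (|u x - u y| ^ p) else 0

lemma trK_meas {n : ℕ} (p : ℝ) (u : EuclideanSpace ℝ (Fin n) → ℝ) (hu : Measurable u) (r : ℝ) :
    Measurable (fun z : EuclideanSpace ℝ (Fin n) × EuclideanSpace ℝ (Fin n) =>
      trK p u r z.1 z.2) := by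
  unfold trK
  refine Measurable.ite ?_ ?_ measurable_const
  · exact measurableSet_lt (by fun_prop) measurable_const
  · have h1 : Measurable (fun z : EuclideanSpace ℝ (Fin n) × EuclideanSpace ℝ (Fin n) => u z.1) :=
      hu.comp measurable_fst
    have h2 : Measurable (fun z : EuclideanSpace ℝ (Fin n) × EuclideanSpace ℝ (Fin n) => u z.2) :=
      hu.comp measurable_snd
    have h3 := h1.sub h2
    exact ((h3.abs).pow_const p).ennreal_ofReal

lemma trK_meas_right {n : ℕ} (p : ℝ) (u : EuclideanSpace ℝ (Fin n) → ℝ) (hu : Measurable u)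
    (r : ℝ) (x : EuclideanSpace ℝ (Fin n)) : Measurable (fun y => trK p u r x y) := by
  have h : Measurable (fun y : EuclideanSpace ℝ (Fin n) => (x, y)) := measurable_prodMk_left
  exact (trK_meas p u hu r).comp (f := fun y : EuclideanSpace ℝ (Fin n) => (x, y)) h

lemma trK_symm {n : ℕ} (p : ℝ) (u : EuclideanSpace ℝ (Fin n) → ℝ) (r : ℝ)
    (x y : EuclideanSpace ℝ (Fin n)) : trK p u r x y = trK p u r y x := by
  unfold trK
  rw [dist_comm, abs_sub_comm]

lemma trK_mid {n : ℕ} (p : ℝ) (hp : 1 ≤ p) (u : EuclideanSpace ℝ (Fin n) → ℝ) (r : ℝ)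
    (x y : EuclideanSpace ℝ (Fin n)) :
    trK p u r x y ≤ ENNReal.ofReal (2 ^ (p - 1)) *
      (trK p u (r / 2) x ((1 / 2 : ℝ) • (x + y)) + trK p u (r / 2) y ((1 / 2 : ℝ) • (x + y))) := by
  unfold trK
  have e1 : dist x ((1 / 2 : ℝ) • (x + y)) = dist x y / 2 := by
    rw [dist_eq_norm, dist_eq_norm]
    have : x - (1 / 2 : ℝ) • (x + y) = (1 / 2 : ℝ) • (x - y) := by module
    rw [this, norm_smul]
    norm_num
    ring
  have e2 : dist y ((1 / 2 : ℝ) • (x + y)) = dist x y / 2 := by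
    rw [dist_eq_norm, dist_eq_norm, ← norm_neg]
    have : -(y - (1 / 2 : ℝ) • (x + y)) = (1 / 2 : ℝ) • (x - y) := by module
    rw [this, norm_smul]
    norm_num
    ring
  rw [e1, e2]
  by_cases h : dist x y < r
  · have h' : dist x y / 2 < r / 2 := by linarith
    rw [if_pos h, if_pos h', if_pos h', ← ENNReal.ofReal_add (by positivity) (by positivity),
      ← ENNReal.ofReal_mul (by positivity)]
    apply ENNReal.ofReal_le_ofReal
    set m := u ((1 / 2 : ℝ) • (x + y))
    have t : |u x - u y| ≤ |u x - m| + |u y - m| := by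
      have := abs_sub_le (u x) m (u y)
      rwa [abs_sub_comm m (u y)] at this
    have t2 := Real.rpow_le_rpow (abs_nonneg _) t (by linarith : (0 : ℝ) ≤ p)
    refine t2.trans ?_
    have := NNReal.rpow_add_le_mul_rpow_add_rpow ⟨|u x - m|, abs_nonneg _⟩
      ⟨|u y - m|, abs_nonneg _⟩ hp
    exact_mod_cast this
  · rw [if_neg h]
    exact bot_le

lemma lint_mid {n : ℕ} (G : EuclideanSpace ℝ (Fin n) → ℝ≥0∞) (hG : Measurable G)
    (x : EuclideanSpace ℝ (Fin n)) :
    ∫⁻ y, G ((1 / 2 : ℝ) • (x + y)) = ENNReal.ofReal (2 ^ (n : ℝ)) * ∫⁻ m, G m := by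
  rw [lintegral_add_left_eq_self (fun y => G ((1 / 2 : ℝ) • y)) x]
  have h := Measure.map_addHaar_smul (volume : Measure (EuclideanSpace ℝ (Fin n)))
    (r := (1 / 2 : ℝ)) (by norm_num)
  have h2 : ∫⁻ y, G ((1 / 2 : ℝ) • y) =
      ∫⁻ m, G m ∂(Measure.map ((1 / 2 : ℝ) • ·) (volume : Measure (EuclideanSpace ℝ (Fin n)))) := by
    rw [lintegral_map hG (by fun_prop)]
  rw [h2, h, lintegral_smul_measure, smul_eq_mul]
  congr 2
  simp

/-- Truncated energy. -/
def trE {n : ℕ} (p : ℝ) (u : EuclideanSpace ℝ (Fin n) → ℝ) (D : Set (EuclideanSpace ℝ (Fin n)))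
    (r : ℝ) : ℝ≥0∞ := ∫⁻ x in D, ∫⁻ y in D, trK p u r x y

lemma inner_mid {n : ℕ} (p : ℝ) (u : EuclideanSpace ℝ (Fin n) → ℝ) (hu : Measurable u)
    (x₀ : EuclideanSpace ℝ (Fin n)) (R r : ℝ) (x : EuclideanSpace ℝ (Fin n))
    (hx : x ∈ ball x₀ R) :
    ∫⁻ y in ball x₀ R, trK p u r x ((1 / 2 : ℝ) • (x + y)) ≤
      ENNReal.ofReal (2 ^ (n : ℝ)) * ∫⁻ m in ball x₀ R, trK p u r x m := by
  have hm : Measurable (fun m => trK p u r x m) := trK_meas_right p u hu r x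
  rw [← lintegral_indicator measurableSet_ball, ← lintegral_indicator measurableSet_ball,
    ← lint_mid _ (hm.indicator measurableSet_ball) x]
  apply lintegral_mono
  intro y
  by_cases hy : y ∈ ball x₀ R
  · have hmid : (1 / 2 : ℝ) • (x + y) ∈ ball x₀ R := by
      rw [smul_add]
      exact (convex_ball x₀ R) hx hy (by norm_num) (by norm_num) (by norm_num)
    simp only [indicator_of_mem hy, indicator_of_mem hmid]
    exact le_rfl
  · simp [indicator_of_notMem hy]

lemma trE_half {n : ℕ} (p : ℝ) (hp : 1 ≤ p) (u : EuclideanSpace ℝ (Fin n) → ℝ) (hu : Measurable u)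
    (x₀ : EuclideanSpace ℝ (Fin n)) (R r : ℝ) :
    trE p u (ball x₀ R) r ≤ ENNReal.ofReal (2 ^ ((n : ℝ) + p)) * trE p u (ball x₀ R) (r / 2) := by
  have hK := trK_meas p u hu (r / 2)
  have m1 : Measurable (fun z : EuclideanSpace ℝ (Fin n) × EuclideanSpace ℝ (Fin n) =>
      trK p u (r / 2) z.1 ((1 / 2 : ℝ) • (z.1 + z.2))) :=
    hK.comp (f := fun z : EuclideanSpace ℝ (Fin n) × EuclideanSpace ℝ (Fin n) =>
      (z.1, (1 / 2 : ℝ) • (z.1 + z.2))) (by fun_prop)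
  have m2 : Measurable (fun z : EuclideanSpace ℝ (Fin n) × EuclideanSpace ℝ (Fin n) =>
      trK p u (r / 2) z.2 ((1 / 2 : ℝ) • (z.1 + z.2))) :=
    hK.comp (f := fun z : EuclideanSpace ℝ (Fin n) × EuclideanSpace ℝ (Fin n) =>
      (z.2, (1 / 2 : ℝ) • (z.1 + z.2))) (by fun_prop)
  have b1 : ∫⁻ x in ball x₀ R, ∫⁻ y in ball x₀ R, trK p u (r / 2) x ((1 / 2 : ℝ) • (x + y)) ≤
      ENNReal.ofReal (2 ^ (n : ℝ)) * trE p u (ball x₀ R) (r / 2) := by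
    unfold trE
    rw [← lintegral_const_mul' _ _ ENNReal.ofReal_ne_top]
    exact setLIntegral_mono' measurableSet_ball
      (fun x hx => inner_mid p u hu x₀ R (r / 2) x hx)
  have b2 : ∫⁻ x in ball x₀ R, ∫⁻ y in ball x₀ R, trK p u (r / 2) y ((1 / 2 : ℝ) • (x + y)) ≤
      ENNReal.ofReal (2 ^ (n : ℝ)) * trE p u (ball x₀ R) (r / 2) := by
    rw [lintegral_lintegral_swap (m2.aemeasurable)]
    simp_rw [add_comm]
    simpa only [add_comm] using b1
  calc trE p u (ball x₀ R) r
      ≤ ∫⁻ x in ball x₀ R, ∫⁻ y in ball x₀ R, ENNReal.ofReal (2 ^ (p - 1)) *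
      (trK p u (r / 2) x ((1 / 2 : ℝ) • (x + y)) + trK p u (r / 2) y ((1 / 2 : ℝ) • (x + y))) := by
        unfold trE
        exact lintegral_mono fun x => lintegral_mono fun y => trK_mid p hp u r x y
    _ = ENNReal.ofReal (2 ^ (p - 1)) *
        ((∫⁻ x in ball x₀ R, ∫⁻ y in ball x₀ R, trK p u (r / 2) x ((1 / 2 : ℝ) • (x + y))) +
        ∫⁻ x in ball x₀ R, ∫⁻ y in ball x₀ R, trK p u (r / 2) y ((1 / 2 : ℝ) • (x + y))) := by
        simp_rw [lintegral_const_mul' _ _ ENNReal.ofReal_ne_top]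
        congr 1
        refine Eq.trans ?_ (lintegral_add_left (m1.lintegral_prod_right') _)
        apply lintegral_congr
        intro x
        exact lintegral_add_left (m1.comp measurable_prodMk_left) _
    _ ≤ ENNReal.ofReal (2 ^ (p - 1)) * (ENNReal.ofReal (2 ^ (n : ℝ)) * trE p u (ball x₀ R) (r / 2)
        + ENNReal.ofReal (2 ^ (n : ℝ)) * trE p u (ball x₀ R) (r / 2)) := by gcongr
    _ = ENNReal.ofReal (2 ^ ((n : ℝ) + p)) * trE p u (ball x₀ R) (r / 2) := by
        rw [← two_mul, ← mul_assoc, ← mul_assoc]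
        congr 1
        rw [show (2 : ℝ≥0∞) = ENNReal.ofReal 2 by simp, ← ENNReal.ofReal_mul (by positivity),
          ← ENNReal.ofReal_mul (by positivity)]
        congr 1
        rw [show (n : ℝ) + p = (p - 1) + 1 + n by ring, Real.rpow_add (by norm_num),
          Real.rpow_add (by norm_num), Real.rpow_one]

lemma trE_iter {n : ℕ} (p : ℝ) (hp : 1 ≤ p) (u : EuclideanSpace ℝ (Fin n) → ℝ) (hu : Measurable u)
    (x₀ : EuclideanSpace ℝ (Fin n)) (R r : ℝ) (k : ℕ) :
    trE p u (ball x₀ R) r ≤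
      ENNReal.ofReal ((2 ^ ((n : ℝ) + p)) ^ k) * trE p u (ball x₀ R) (r / 2 ^ k) := by
  induction k with
  | zero => simp
  | succ k ih =>
    refine ih.trans ?_
    have := trE_half p hp u hu x₀ R (r / 2 ^ k)
    calc _ ≤ ENNReal.ofReal ((2 ^ ((n : ℝ) + p)) ^ k) * (ENNReal.ofReal (2 ^ ((n : ℝ) + p)) *
          trE p u (ball x₀ R) (r / 2 ^ k / 2)) := by gcongr
      _ = _ := by
        rw [← mul_assoc, ← ENNReal.ofReal_mul (by positivity), ← pow_succ, div_div, ← pow_succ]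

lemma geo_sum (b : ℝ) (hb : 1 < b) (P : ℕ → Prop) [DecidablePred P] (X : ℝ) (hX : 0 ≤ X)
    (h : ∀ k, P k → b ^ k ≤ X) (N : ℕ) :
    ∑ k ∈ Finset.range N, (if P k then b ^ k else 0) ≤ (1 - b⁻¹)⁻¹ * X ∧
    ∑ k ∈ Finset.range N, (if P k then b ^ k else 0) ≤ (1 - b⁻¹)⁻¹ * b ^ N * b⁻¹ := by
  have hb0 : 0 < b := by linarith
  have hq : 0 < 1 - b⁻¹ := by
    have := inv_lt_one_of_one_lt₀ hb
    linarith
  induction N with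
  | zero =>
    simp only [Finset.range_zero, Finset.sum_empty]
    exact ⟨by positivity, by positivity⟩
  | succ N ih =>
    rw [Finset.sum_range_succ]
    have key : b ^ N + (1 - b⁻¹)⁻¹ * b ^ N * b⁻¹ = (1 - b⁻¹)⁻¹ * b ^ N := by
      have : (1 - b⁻¹)⁻¹ * (1 - b⁻¹) = 1 := inv_mul_cancel₀ hq.ne'
      linear_combination (-b ^ N) * this
    have e : (1 - b⁻¹)⁻¹ * b ^ (N + 1) * b⁻¹ = (1 - b⁻¹)⁻¹ * b ^ N := by
      rw [pow_succ]
      field_simp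
    rw [e]
    by_cases hP : P N
    · rw [if_pos hP]
      have h2 : (1 - b⁻¹)⁻¹ * b ^ N ≤ (1 - b⁻¹)⁻¹ * X :=
        mul_le_mul_of_nonneg_left (h N hP) (by positivity)
      exact ⟨by linarith [ih.2], by linarith [ih.2]⟩
    · rw [if_neg hP, add_zero]
      refine ⟨ih.1, ?_⟩
      have : 0 < b ^ N := by positivity
      linarith [ih.2]

lemma pointwise_sum {n : ℕ} (p a ρ : ℝ) (hp : 1 ≤ p) (ha : 0 < a) (hρ : 0 < ρ)
    (u : EuclideanSpace ℝ (Fin n) → ℝ) (x y : EuclideanSpace ℝ (Fin n)) :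
    ∑' k : ℕ, ENNReal.ofReal (((2 : ℝ) ^ a) ^ k) * trK p u (ρ / 2 ^ k) x y ≤
      ENNReal.ofReal ((1 - ((2 : ℝ) ^ a)⁻¹)⁻¹ * ρ ^ a) *
        ENNReal.ofReal (|u x - u y| ^ p / dist x y ^ a) := by
  rcases eq_or_ne x y with rfl | hxy
  · have : p ≠ 0 := by linarith
    simp [trK, Real.zero_rpow this]
  have hd : 0 < dist x y := dist_pos.2 hxy
  have hb : 1 < (2 : ℝ) ^ a := Real.one_lt_rpow (by norm_num) ha
  have hq : 0 < 1 - ((2 : ℝ) ^ a)⁻¹ := by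
    have := inv_lt_one_of_one_lt₀ hb
    linarith
  apply ENNReal.tsum_le_of_sum_range_le
  intro N
  have g := (geo_sum ((2 : ℝ) ^ a) hb (fun k => dist x y < ρ / 2 ^ k) ((ρ / dist x y) ^ a)
    (by positivity) (by
      intro k hk
      rw [← Real.rpow_natCast, ← Real.rpow_mul (by norm_num), mul_comm, Real.rpow_mul (by norm_num),
        Real.rpow_natCast]
      apply Real.rpow_le_rpow (by positivity) _ ha.le
      rw [le_div_iff₀ hd]
      rw [lt_div_iff₀ (by positivity)] at hk
      linarith) N).1
  have e : ∀ k : ℕ, ENNReal.ofReal (((2 : ℝ) ^ a) ^ k) * trK p u (ρ / 2 ^ k) x y =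
      ENNReal.ofReal ((if dist x y < ρ / 2 ^ k then ((2 : ℝ) ^ a) ^ k else 0) *
        |u x - u y| ^ p) := by
    intro k
    unfold trK
    split_ifs
    · rw [ENNReal.ofReal_mul (by positivity)]
    · simp
  simp_rw [e]
  rw [← ENNReal.ofReal_sum_of_nonneg (by intro k _; split_ifs <;> positivity), ← Finset.sum_mul,
    ← ENNReal.ofReal_mul (by positivity)]
  apply ENNReal.ofReal_le_ofReal
  calc _ ≤ (1 - ((2 : ℝ) ^ a)⁻¹)⁻¹ * (ρ / dist x y) ^ a * |u x - u y| ^ p := by gcongr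
    _ = _ := by
      rw [Real.div_rpow hρ.le hd.le]
      ring

lemma trE_sum {n : ℕ} (s p ρ : ℝ) (hp : 1 ≤ p) (hs : 0 < s) (hρ : 0 < ρ)
    (u : EuclideanSpace ℝ (Fin n) → ℝ) (hu : Measurable u) (D : Set (EuclideanSpace ℝ (Fin n))) :
    ∑' k : ℕ, ENNReal.ofReal (((2 : ℝ) ^ ((n : ℝ) + s * p)) ^ k) * trE p u D (ρ / 2 ^ k) ≤
      ENNReal.ofReal ((1 - ((2 : ℝ) ^ ((n : ℝ) + s * p))⁻¹)⁻¹ * ρ ^ ((n : ℝ) + s * p)) *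
        gagliardoE n s p D u := by
  have ha : 0 < (n : ℝ) + s * p := by positivity
  have hm : ∀ k : ℕ, Measurable (fun z : EuclideanSpace ℝ (Fin n) × EuclideanSpace ℝ (Fin n) =>
      ENNReal.ofReal (((2 : ℝ) ^ ((n : ℝ) + s * p)) ^ k) * trK p u (ρ / 2 ^ k) z.1 z.2) :=
    fun k => (trK_meas p u hu _).const_mul _
  unfold gagliardoE trE
  simp_rw [← lintegral_const_mul' _ _ ENNReal.ofReal_ne_top]
  rw [← lintegral_tsum (fun k => ((hm k).lintegral_prod_right').aemeasurable)]
  apply lintegral_mono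
  intro x
  dsimp only
  have hmx : ∀ k : ℕ, Measurable (fun y : EuclideanSpace ℝ (Fin n) =>
      ENNReal.ofReal (((2 : ℝ) ^ ((n : ℝ) + s * p)) ^ k) * trK p u (ρ / 2 ^ k) x y) :=
    fun k => (trK_meas_right p u hu _ x).const_mul _
  rw [← lintegral_tsum (fun k => (hmx k).aemeasurable)]
  exact lintegral_mono fun y => pointwise_sum p _ ρ hp ha hρ u x y

lemma trE_bound {n : ℕ} (s p ρ : ℝ) (hp : 1 ≤ p) (hs : 0 < s) (hs1 : s < 1) (hρ : 0 < ρ)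
    (u : EuclideanSpace ℝ (Fin n) → ℝ) (hu : Measurable u)
    (x₀ : EuclideanSpace ℝ (Fin n)) (R : ℝ) :
    trE p u (ball x₀ R) ρ ≤
      ENNReal.ofReal ((1 - (2 : ℝ) ^ (-((1 - s) * p))) *
        ((1 - ((2 : ℝ) ^ ((n : ℝ) + s * p))⁻¹)⁻¹ * ρ ^ ((n : ℝ) + s * p))) *
        gagliardoE n s p (ball x₀ R) u := by
  have hpos : 0 < (1 - s) * p := mul_pos (by linarith) (by linarith)
  set q : ℝ := (2 : ℝ) ^ (-((1 - s) * p)) with hqdef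
  have hq0 : 0 < q := by positivity
  have hq1 : q < 1 := Real.rpow_lt_one_of_one_lt_of_neg (by norm_num) (by linarith)
  have h1 := trE_sum s p ρ hp hs hρ u hu (ball x₀ R)
  have h2 : ∑' k : ℕ, ENNReal.ofReal q ^ k * trE p u (ball x₀ R) ρ ≤
      ∑' k : ℕ, ENNReal.ofReal (((2 : ℝ) ^ ((n : ℝ) + s * p)) ^ k) *
        trE p u (ball x₀ R) (ρ / 2 ^ k) := by
    apply ENNReal.tsum_le_tsum
    intro k
    calc _ ≤ ENNReal.ofReal q ^ k * (ENNReal.ofReal ((2 ^ ((n : ℝ) + p)) ^ k) *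
          trE p u (ball x₀ R) (ρ / 2 ^ k)) := by
          gcongr
          exact trE_iter p hp u hu x₀ R ρ k
      _ = _ := by
        rw [← mul_assoc, ← ENNReal.ofReal_pow hq0.le, ← ENNReal.ofReal_mul (by positivity),
          ← mul_pow, hqdef, ← Real.rpow_add (by norm_num)]
        congr 4
        ring_nf
  have h3 := h2.trans h1
  rw [ENNReal.tsum_mul_right, ENNReal.tsum_geometric] at h3
  have e : (1 - ENNReal.ofReal q) = ENNReal.ofReal (1 - q) := by
    rw [ENNReal.ofReal_sub _ hq0.le, ENNReal.ofReal_one]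
  rw [e] at h3
  have hne : ENNReal.ofReal (1 - q) ≠ 0 := by
    simp; exact hq1
  calc trE p u (ball x₀ R) ρ = ENNReal.ofReal (1 - q) * ((ENNReal.ofReal (1 - q))⁻¹ *
        trE p u (ball x₀ R) ρ) := by
        rw [← mul_assoc, ENNReal.mul_inv_cancel hne ENNReal.ofReal_ne_top, one_mul]
    _ ≤ ENNReal.ofReal (1 - q) * _ := mul_le_mul_right h3 _
    _ = _ := by rw [← mul_assoc, ← ENNReal.ofReal_mul (by linarith)]

lemma fat_bound {n : ℕ} (p : ℝ) (u : EuclideanSpace ℝ (Fin n) → ℝ)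
    (x₀ : EuclideanSpace ℝ (Fin n)) (R : ℝ) (Ω : Set (EuclideanSpace ℝ (Fin n)))
    (hΩ : MeasurableSet Ω) (hsub : Ω ⊆ ball x₀ R) (hz : ∀ᵐ x, x ∈ Ω → u x = 0)
    (hfin : (∫⁻ x in ball x₀ R, ENNReal.ofReal (|u x| ^ p)) < ⊤) :
    volume Ω * (∫⁻ x in ball x₀ R, ENNReal.ofReal (|u x| ^ p)) ≤
      trE p u (ball x₀ R) (2 * R) := by
  have hΩt : volume Ω ≠ ⊤ := ((measure_mono hsub).trans_lt measure_ball_lt_top).ne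
  rw [← lintegral_const_mul' _ _ hΩt]
  unfold trE
  apply setLIntegral_mono' measurableSet_ball
  intro x hx
  have : volume Ω * ENNReal.ofReal (|u x| ^ p) = ∫⁻ y in Ω, trK p u (2 * R) x y := by
    rw [mul_comm, ← setLIntegral_const]
    apply setLIntegral_congr_fun_ae hΩ
    filter_upwards [hz] with y hy hyΩ
    have hd : dist x y < 2 * R := by
      have h1 := mem_ball.1 hx
      have h2 := mem_ball'.1 (hsub hyΩ)
      linarith [dist_triangle x x₀ y]
    rw [trK, if_pos hd, hy hyΩ, sub_zero]
  rw [this]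
  exact lintegral_mono_set hsub

theorem fractional_poincare_fat_zero_set (n : ℕ) (p s₀ γ : ℝ) (hp : 1 ≤ p) (hs₀ : 0 < s₀)
    (hγ₁ : 0 < γ) (hγ₂ : γ ≤ 1) :
    ∃ c : ℝ, 1 ≤ c ∧
      ∀ s : ℝ, s₀ ≤ s → s < 1 →
        ∀ (R : ℝ) (x₀ : EuclideanSpace ℝ (Fin n)) (u : EuclideanSpace ℝ (Fin n) → ℝ),
          0 < R → Measurable u →
          (∫⁻ x in ball x₀ R, ENNReal.ofReal (|u x| ^ p)) < ⊤ →
          gagliardoE n s p (ball x₀ R) u < ⊤ →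
          (∃ Ω₀ : Set (EuclideanSpace ℝ (Fin n)), MeasurableSet Ω₀ ∧ Ω₀ ⊆ ball x₀ R ∧
            ENNReal.ofReal γ * volume (ball x₀ R) ≤ volume Ω₀ ∧
            ∀ᵐ x, x ∈ Ω₀ → u x = 0) →
          (∫⁻ x in ball x₀ R, ENNReal.ofReal (|u x| ^ p)) ≤
            ENNReal.ofReal (c * (1 - s) * R ^ (s * p)) * gagliardoE n s p (ball x₀ R) u := by
  obtain ⟨v, hv⟩ : ∃ v : ℝ, v = (volume (ball (0 : EuclideanSpace ℝ (Fin n)) 1)).toReal :=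
    ⟨_, rfl⟩
  have hv0 : 0 < v := by
    rw [hv]
    exact ENNReal.toReal_pos (measure_ball_pos _ _ one_pos).ne' measure_ball_lt_top.ne
  have hvE : volume (ball (0 : EuclideanSpace ℝ (Fin n)) 1) = ENNReal.ofReal v := by
    rw [hv, ENNReal.ofReal_toReal measure_ball_lt_top.ne]
  have hsp₀ : 0 < s₀ * p := by positivity
  have hb₀ : 1 < (2 : ℝ) ^ (s₀ * p) := Real.one_lt_rpow (by norm_num) hsp₀
  have hA : 0 < 1 - ((2 : ℝ) ^ (s₀ * p))⁻¹ := by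
    have := inv_lt_one_of_one_lt₀ hb₀
    linarith
  refine ⟨max 1 (p * (1 - ((2 : ℝ) ^ (s₀ * p))⁻¹)⁻¹ * 2 ^ ((n : ℝ) + p) / (γ * v)),
    le_max_left _ _, ?_⟩
  intro s hs hs1 R x₀ u hR hu hfin _ ⟨Ω, hΩ, hsub, hvol, hz⟩
  have hspos : 0 < s := by linarith
  have h1 := fat_bound p u x₀ R Ω hΩ hsub hz hfin
  have h2 := trE_bound s p (2 * R) hp hspos hs1 (by positivity) u hu x₀ R
  have hball : ENNReal.ofReal γ * volume (ball x₀ R) = ENNReal.ofReal (γ * R ^ n * v) := by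
    rw [Measure.addHaar_ball_of_pos _ _ hR, hvE, finrank_euclideanSpace, Fintype.card_fin,
      ← ENNReal.ofReal_mul (by positivity), ← ENNReal.ofReal_mul (by positivity), mul_assoc]
  rw [hball] at hvol
  set I := ∫⁻ x in ball x₀ R, ENNReal.ofReal (|u x| ^ p)
  have hM : 0 < γ * R ^ n * v := by positivity
  have h3 : ENNReal.ofReal (γ * R ^ n * v) * I ≤ _ :=
    ((mul_le_mul_left hvol I).trans h1).trans h2
  have hI : I = ENNReal.ofReal (γ * R ^ n * v)⁻¹ * (ENNReal.ofReal (γ * R ^ n * v) * I) := by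
    rw [← mul_assoc, ← ENNReal.ofReal_mul (by positivity), inv_mul_cancel₀ hM.ne',
      ENNReal.ofReal_one, one_mul]
  rw [hI]
  refine (mul_le_mul_right h3 _).trans ?_
  rw [← mul_assoc, ← ENNReal.ofReal_mul (by positivity)]
  refine mul_le_mul_left (ENNReal.ofReal_le_ofReal ?_) _
  -- real inequality
  have r1 : 1 - (2 : ℝ) ^ (-((1 - s) * p)) ≤ (1 - s) * p := by
    rw [Real.rpow_def_of_pos (by norm_num)]
    have := Real.add_one_le_exp (Real.log 2 * -((1 - s) * p))
    have hl : Real.log 2 ≤ 1 := by linarith [Real.log_two_lt_d9]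
    have hpp : 0 ≤ (1 - s) * p := mul_nonneg (by linarith) (by linarith)
    nlinarith
  have r2 : (1 - ((2 : ℝ) ^ ((n : ℝ) + s * p))⁻¹)⁻¹ ≤ (1 - ((2 : ℝ) ^ (s₀ * p))⁻¹)⁻¹ := by
    have : (2 : ℝ) ^ (s₀ * p) ≤ (2 : ℝ) ^ ((n : ℝ) + s * p) := by
      apply Real.rpow_le_rpow_of_exponent_le (by norm_num)
      have : s₀ * p ≤ s * p := mul_le_mul_of_nonneg_right hs (by linarith)
      have : (0 : ℝ) ≤ n := by positivity
      linarith
    gcongr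
  have r3 : (2 * R) ^ ((n : ℝ) + s * p) ≤ 2 ^ ((n : ℝ) + p) * (R ^ n * R ^ (s * p)) := by
    rw [Real.mul_rpow (by norm_num) hR.le, Real.rpow_add hR, Real.rpow_natCast]
    gcongr
    · norm_num
    · nlinarith
  have hs1' : 0 < 1 - s := by linarith
  have hp0 : 0 < p := by linarith
  calc (γ * R ^ n * v)⁻¹ * ((1 - (2 : ℝ) ^ (-((1 - s) * p))) *
        ((1 - ((2 : ℝ) ^ ((n : ℝ) + s * p))⁻¹)⁻¹ * (2 * R) ^ ((n : ℝ) + s * p)))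
      ≤ (γ * R ^ n * v)⁻¹ * (((1 - s) * p) * ((1 - ((2 : ℝ) ^ (s₀ * p))⁻¹)⁻¹ *
        (2 ^ ((n : ℝ) + p) * (R ^ n * R ^ (s * p))))) := by
        have hnn : 0 ≤ (1 - ((2 : ℝ) ^ ((n : ℝ) + s * p))⁻¹)⁻¹ := by
          have : 1 ≤ (2 : ℝ) ^ ((n : ℝ) + s * p) :=
            Real.one_le_rpow (by norm_num) (by positivity)
          have := inv_le_one_of_one_le₀ this
          exact inv_nonneg.2 (by linarith)
        gcongr
    _ = (p * (1 - ((2 : ℝ) ^ (s₀ * p))⁻¹)⁻¹ * 2 ^ ((n : ℝ) + p) / (γ * v)) * (1 - s) *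
        R ^ (s * p) := by
        have : R ^ n ≠ 0 := by positivity
        field_simp
    _ ≤ _ := by
        gcongr
        exact le_max_right _ _
end
end
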